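/- arXiv:1909.01972 — 2 statements merged into one kernel-verified Lean document; each statement's English description precedes it below -/
import Mathlib

section
/- For every b, b' > 0 there exists a constant c_{b,b'} > 0 such that for all n ≥ 1, every non-empty A ⊆ G_n with |A| ≤ b·ln(N_n) and every good vertex x ∈ G_A at the boundary of A, P^{G_n}-almost surely on the event { sup_{z∈A} |Ψ_{G_n}(z)| ≤ b'·√(ln(N_n)) } one has both | E^{G_n}[ Ψ_{G_n}(x) | σ(Ψ_{G_n}(y), y ∈ A) ] − (1/(d−1))·Ψ_{G_n}(x̄) | ≤ c_{b,b'}·(ln(N_n))^{−2} and | Var_{P^{G_n}}( Ψ_{G_n}(x) | σ(Ψ_{G_n}(y), y ∈ A) ) − d/(d−1) | ≤ c_{b,b'}·(ln(N_n))^{−3}, where x̄ denotes the unique neighbour of x in A. -/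
open MeasureTheory ProbabilityTheory Filter Set
open scoped ENNReal NNReal ENat Classical

namespace GFF

variable {V : Type*} {T : Type*}

/-- Number of ordered adjacent pairs inside `U` (twice the number of edges of the induced
subgraph). -/
noncomputable def adjPairs (G : SimpleGraph V) (U : Set V) : ℕ :=
  Set.ncard {p : V × V | p.1 ∈ U ∧ p.2 ∈ U ∧ G.Adj p.1 p.2}

/-- `U` (assumed connected) induces a tree, i.e. has tree excess zero. -/
def TxZero (G : SimpleGraph V) (U : Set V) : Prop :=
  adjPairs G U = 2 * (Set.ncard U - 1)

/-- Closed ball of radius `R` for the graph distance. -/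
def gball (G : SimpleGraph V) (x : V) (R : ℕ) : Set V := {y | G.dist x y ≤ R}

/-- Set of vertices within distance `R` of the set `A`. -/
def sball (G : SimpleGraph V) (A : Set V) (R : ℕ) : Set V := {y | ∃ a ∈ A, G.dist a y ≤ R}

/-- Connected component containing `x` of the level set `{ω ≥ h}`. -/
def levelComp (G : SimpleGraph V) (h : ℝ) (ω : V → ℝ) (x : V) : Set V :=
  {y | ∃ p : G.Walk x y, ∀ v ∈ p.support, h ≤ ω v}

/-- `G` is `d`-regular. -/
def IsReg (G : SimpleGraph V) (d : ℕ) : Prop := ∀ v, Nat.card (G.neighborSet v) = d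

/-- `G` is an infinite `d`-regular tree. -/
def IsRegTree (G : SimpleGraph V) (d : ℕ) : Prop :=
  G.Connected ∧ G.IsAcyclic ∧ IsReg G d

/-- Transition matrix of SRW on a `d`-regular graph. -/
noncomputable def transP [Fintype V] (G : SimpleGraph V) (d : ℕ) : Matrix V V ℝ :=
  Matrix.of fun u v => if G.Adj u v then ((d : ℝ))⁻¹ else 0

/-- All non-zero eigenvalues of `I - P` are at least `β`. -/
def SpectralGapLB [Fintype V] (G : SimpleGraph V) (d : ℕ) (β : ℝ) : Prop :=
  ∀ (f : V → ℝ) (lam : ℝ),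
    Matrix.mulVec ((1 : Matrix V V ℝ) - transP G d) f = lam • f → f ≠ 0 → lam = 0 ∨ β ≤ lam

/-- `P_x[X̄_t = y]` for the continuous-time SRW with i.i.d. mean-one exponential holding
times (Poissonized jump chain). -/
noncomputable def heatK [Fintype V] (G : SimpleGraph V) (d : ℕ) (t : ℝ) (x y : V) : ℝ :=
  ∑' k : ℕ, Real.exp (-t) * t ^ k / (Nat.factorial k) * ((transP G d) ^ k) x y

/-- The zero-average Green function. -/
noncomputable def zGreen [Fintype V] (G : SimpleGraph V) (d Nn : ℕ) (x y : V) : ℝ :=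
  ∫ t in Set.Ioi (0 : ℝ), (heatK G d t x y - 1 / (Nn : ℝ))

/-- Green function of SRW on the `d`-regular tree. -/
noncomputable def treeGreen (G : SimpleGraph V) (d : ℕ) (x y : V) : ℝ :=
  (((d : ℝ) - 1) / ((d : ℝ) - 2)) * (((d : ℝ) - 1)⁻¹) ^ (G.dist x y)

/-- `μ` is the law of the centred Gaussian field with covariance `K`. -/
def IsGaussianField {I : Type*} (μ : Measure (I → ℝ)) (K : I → I → ℝ) : Prop :=
  IsProbabilityMeasure μ ∧
    ∀ c : I →₀ ℝ,
      μ.map (fun ω => ∑ i ∈ c.support, c i * ω i) =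
        gaussianReal 0 (Real.toNNReal (∑ i ∈ c.support, ∑ j ∈ c.support, c i * c j * K i j))

/-- One-step transition probability of SRW. -/
noncomputable def srwStep (G : SimpleGraph V) (d : ℕ) (u v : V) : ℝ≥0∞ :=
  if G.Adj u v then (d : ℝ≥0∞)⁻¹ else 0

/-- `W x` is the law of discrete-time SRW on `G` started at `x`. -/
def IsSRW [MeasurableSpace V] (G : SimpleGraph V) (d : ℕ) (W : V → Measure (ℕ → V)) : Prop :=
  (∀ x, IsProbabilityMeasure (W x)) ∧
    ∀ (x : V) (k : ℕ) (p : ℕ → V),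
      W x {ω | ∀ i ≤ k, ω i = p i} =
        (if p 0 = x then 1 else 0) * ∏ i ∈ Finset.range k, srwStep G d (p i) (p (i + 1))

/-- Entrance time of the set `A` (`⊤` if never entered). -/
noncomputable def hitTime (A : Set V) (ω : ℕ → V) : ℕ∞ :=
  sInf ((Nat.cast : ℕ → ℕ∞) '' {k | ω k ∈ A})

/-- Exit time of the set `U`. -/
noncomputable def exitTime (U : Set V) (ω : ℕ → V) : ℕ∞ := hitTime Uᶜ ω

/-- Position of the walk at the entrance time of `A`. -/
noncomputable def stopAt (A : Set V) (ω : ℕ → V) : V := ω (hitTime A ω).toNat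

/-- `π` is a cover tree of `G` at `x`. -/
def IsCoverMap (Gt : SimpleGraph T) (G : SimpleGraph V) (o : T) (x : V) (π : T → V) : Prop :=
  π o = x ∧ Function.Surjective π ∧ ∀ y : T, π '' (Gt.neighborSet y) = G.neighborSet (π y)

/-- `T_d^+`: the vertices of the tree whose geodesic to `o` avoids the fixed neighbour
`obar` of `o`. -/
def treePlus (Gt : SimpleGraph T) (o obar : T) : Set T :=
  {z | Gt.dist z obar = Gt.dist z o + 1}

/-- `S^+_{T_d}(o,R)`. -/
def spherePlus (Gt : SimpleGraph T) (o obar : T) (R : ℕ) : Set T :=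
  {z | z ∈ treePlus Gt o obar ∧ Gt.dist o z = R}

/-- The critical value for level-set percolation on the tree (w.r.t. the law `μT`). -/
noncomputable def hstar (Gt : SimpleGraph T) (o : T) (μT : Measure (T → ℝ)) : ℝ :=
  sInf {h : ℝ | μT {ω | (levelComp Gt h ω o).Infinite} = 0}

/-- The forward percolation probability `η⁺(h)`. -/
noncomputable def etaPlus (Gt : SimpleGraph T) (o obar : T) (μT : Measure (T → ℝ)) (h : ℝ) :
    ℝ :=
  (μT {ω | (levelComp Gt h ω o ∩ treePlus Gt o obar).Infinite}).toReal

/-- `s_n`. -/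
noncomputable def sn (d Nn : ℕ) : ℕ :=
  max 1 ⌊(8 : ℝ) * Real.logb ((d : ℝ) - 1) (Real.logb ((d : ℝ) - 1) (Nn : ℝ))⌋₊

/-- `c₀ = αβ/(d-1)`. -/
noncomputable def c0 (d : ℕ) (α β : ℝ) : ℝ := α * β / ((d : ℝ) - 1)

/-- `r_n`. -/
noncomputable def rn (d : ℕ) (α β : ℝ) (Nn : ℕ) : ℕ :=
  max 1 ⌊(c0 d α β / 18) * Real.logb ((d : ℝ) - 1) (Nn : ℝ)⌋₊

/-- `R_n`. -/
noncomputable def Rn (d : ℕ) (α β : ℝ) (Nn : ℕ) : ℕ :=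
  max 1 ⌊(c0 d α β / 6) * Real.logb ((d : ℝ) - 1) (Nn : ℝ)⌋₊

/-- `F_A(x,s)`: the vertices of `B(A,s) ∖ A` connected to `x` within `B(A,s) ∖ A`. -/
def Fset (G : SimpleGraph V) (A : Set V) (s : ℕ) (x : V) : Set V :=
  {z | ∃ p : G.Walk x z, ∀ v ∈ p.support, v ∈ sball G A s ∧ v ∉ A}

/-- Good vertex at the boundary of `A`. -/
def GoodVertex (G : SimpleGraph V) (A : Set V) (s : ℕ) (x : V) : Prop :=
  x ∉ A ∧ (∃! y, y ∈ A ∧ G.Adj x y) ∧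
    TxZero G (Fset G A s x) ∧
    ∀ y : V, y ∉ A → (∃ a ∈ A, G.Adj y a) → y ≠ x →
      ∀ p : G.Walk y x, (∀ v ∈ p.support, v ∉ A) → ∃ v ∈ p.support, v ∉ sball G A s

end GFF
namespace GFF
variable {V : Type} [Fintype V]

lemma exists_spec (L : Matrix V V ℝ) (hL : L.IsHermitian) :
    ∃ (u : V → V → ℝ) (m : V → ℝ),
      (∀ i j, ∑ x, u i x * u j x = if i = j then 1 else 0) ∧
      (∀ x y, ∑ i, u i x * u i y = if x = y then 1 else 0) ∧
      (∀ i, Matrix.mulVec L (u i) = m i • u i) := by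
  refine ⟨fun i x => hL.eigenvectorBasis i x, hL.eigenvalues, ?_, ?_, ?_⟩
  · intro i j
    have := orthonormal_iff_ite.1 hL.eigenvectorBasis.orthonormal j i
    rw [EuclideanSpace.inner_eq_star_dotProduct] at this
    simp only [dotProduct, Pi.star_apply, star_trivial] at this
    rw [this]; simp [eq_comm]
  · intro x y
    have h := (Matrix.mem_unitaryGroup_iff.1 hL.eigenvectorUnitary.2)
    have := congrFun (congrFun h x) y
    simp only [Matrix.mul_apply, Matrix.star_apply, star_trivial, Matrix.one_apply] at this
    rw [← this]; rfl
  · intro i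
    exact hL.mulVec_eigenvectorBasis i

/-- basic sum rules of a regular graph -/
lemma sum_nbr (G : SimpleGraph V) (d : ℕ) (hreg : IsReg G d) (x : V) :
    ∑ y, (if G.Adj x y then (1:ℝ) else 0) = d := by
  have := hreg x
  rw [Finset.sum_boole]
  norm_cast
  rw [← this, Nat.card_eq_fintype_card, ← Set.toFinset_card]
  congr 1; ext y; simp

lemma transP_symm (G : SimpleGraph V) (d : ℕ) (x y : V) : transP G d x y = transP G d y x := by
  simp [transP, G.adj_comm]

lemma transP_nonneg (G : SimpleGraph V) (d : ℕ) (x y : V) : 0 ≤ transP G d x y := by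
  simp only [transP, Matrix.of_apply]; split_ifs <;> positivity

lemma transP_row (G : SimpleGraph V) (d : ℕ) (hd : 3 ≤ d) (hreg : IsReg G d) (x : V) :
    ∑ y, transP G d x y = 1 := by
  have h := sum_nbr G d hreg x
  have hd0 : (d:ℝ) ≠ 0 := by positivity
  have : ∀ y, transP G d x y = (d:ℝ)⁻¹ * (if G.Adj x y then (1:ℝ) else 0) := by
    intro y; simp [transP]
  simp_rw [this]; rw [← Finset.mul_sum, h]; field_simp

lemma transP_contr (G : SimpleGraph V) (d : ℕ) (hd : 3 ≤ d) (hreg : IsReg G d) (f : V → ℝ) :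
    ∑ x, (Matrix.mulVec (transP G d) f x)^2 ≤ ∑ x, f x ^ 2 := by
  have h1 : ∀ x, (Matrix.mulVec (transP G d) f x)^2 ≤ ∑ y, transP G d x y * f y ^ 2 := by
    intro x
    have hcs := Finset.sum_mul_sq_le_sq_mul_sq Finset.univ (fun y => Real.sqrt (transP G d x y))
      (fun y => Real.sqrt (transP G d x y) * f y)
    have e1 : ∀ y, Real.sqrt (transP G d x y) * (Real.sqrt (transP G d x y) * f y)
        = transP G d x y * f y := by
      intro y; rw [← mul_assoc, Real.mul_self_sqrt (transP_nonneg G d x y)]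
    simp only [e1, mul_pow, Real.sq_sqrt (transP_nonneg G d x _), transP_row G d hd hreg x,
      one_mul] at hcs
    simpa [Matrix.mulVec, dotProduct] using hcs
  calc _ ≤ ∑ x, ∑ y, transP G d x y * f y ^ 2 := Finset.sum_le_sum fun x _ => h1 x
    _ = ∑ y, f y ^ 2 := by
      rw [Finset.sum_comm]
      refine Finset.sum_congr rfl fun y _ => ?_
      rw [← Finset.sum_mul]
      simp_rw [transP_symm G d _ y]
      rw [transP_row G d hd hreg, one_mul]

lemma harm_const (G : SimpleGraph V) (d : ℕ) (hd : 3 ≤ d) (hreg : IsReg G d) (hc : G.Connected)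
    (f : V → ℝ) (hf : Matrix.mulVec ((1 : Matrix V V ℝ) - transP G d) f = 0) (x y : V) :
    f x = f y := by
  have hne : Nonempty V := hc.nonempty
  obtain ⟨z, hz⟩ := Finite.exists_max f
  have hd0 : (0:ℝ) < d := by positivity
  have key : ∀ a b, G.Adj a b → f a = f z → f b = f z := by
    intro a b hab ha
    have h0 := congrFun hf a
    rw [Matrix.sub_mulVec, Matrix.one_mulVec] at h0
    simp only [Pi.sub_apply, Pi.zero_apply] at h0
    have h1 : ∑ c, transP G d a c * (f z - f c) = 0 := by
      simp_rw [mul_sub]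
      rw [Finset.sum_sub_distrib, ← Finset.sum_mul, transP_row G d hd hreg, one_mul]
      have : ∑ c, transP G d a c * f c = Matrix.mulVec (transP G d) f a := rfl
      rw [this]; linarith
    have h2 := (Finset.sum_eq_zero_iff_of_nonneg (fun c _ =>
      mul_nonneg (transP_nonneg G d a c) (sub_nonneg.2 (hz c)))).1 h1 b (Finset.mem_univ _)
    simp only [transP, Matrix.of_apply, if_pos hab] at h2
    have : (d:ℝ)⁻¹ ≠ 0 := by positivity
    rcases mul_eq_zero.1 h2 with h | h
    · exact absurd h this
    · linarith
  have all : ∀ w, f w = f z := by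
    intro w
    obtain ⟨p⟩ := hc.preconnected z w
    have : ∀ (a b : V) (p : G.Walk a b), f a = f z → f b = f z := by
      intro a b p
      induction p with
      | nil => exact id
      | cons h p ih => intro ha; exact ih (key _ _ h ha)
    exact this _ _ p rfl
  rw [all x, all y]

end GFF

namespace GFF
variable {V : Type} [Fintype V]

/-- the properties of the Green function we use -/
structure GreenProps (G : SimpleGraph V) (d : ℕ) (β : ℝ) (K : Matrix V V ℝ) : Prop where
  symm : ∀ x y, K x y = K y x
  inv : ∀ x y, (K * ((1 : Matrix V V ℝ) - transP G d)) x y =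
    (if x = y then 1 else 0) - 1 / (Fintype.card V : ℝ)
  one : ∀ x, ∑ y, K x y = 0
  bd : ∀ f : V → ℝ, ∑ x, (Matrix.mulVec K f x) ^ 2 ≤ (β⁻¹) ^ 2 * ∑ x, f x ^ 2

lemma green_props (G : SimpleGraph V) (d : ℕ) (hd : 3 ≤ d) (hreg : IsReg G d) (hc : G.Connected)
    (β : ℝ) (hβ : 0 < β) (hgap : SpectralGapLB G d β) :
    GreenProps G d β (Matrix.of (zGreen G d (Fintype.card V))) := by
  set L : Matrix V V ℝ := (1 : Matrix V V ℝ) - transP G d with hLdef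
  have hLs : ∀ x y, L x y = L y x := by
    intro x y
    simp only [hLdef, Matrix.sub_apply, Matrix.one_apply, transP_symm G d x y, eq_comm]
  have hL : L.IsHermitian := by
    ext x y; simp [Matrix.conjTranspose_apply, hLs x y]
  obtain ⟨u, m, o1, o2, ev⟩ := exists_spec L hL
  have hne : Nonempty V := hc.nonempty
  have hN : (0:ℝ) < Fintype.card V := by exact_mod_cast Fintype.card_pos
  have ev' : ∀ i x, ∑ y, L x y * u i y = m i * u i x := by
    intro i x; have := congrFun (ev i) x; simpa [Matrix.mulVec, dotProduct] using this
  have une : ∀ i, u i ≠ 0 := by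
    intro i h; have := o1 i i; simp [h] at this
  have hm : ∀ i, m i = 0 ∨ β ≤ m i := fun i => hgap (u i) (m i) (ev i) (une i)
  have L1 : ∀ x, ∑ y, L x y = 0 := by
    intro x
    simp [hLdef, Matrix.sub_apply, Finset.sum_sub_distrib, Matrix.one_apply,
      transP_row G d hd hreg]
  -- zero modes
  have hu0 : ∀ i, m i ≠ 0 → ∑ x, u i x = 0 := by
    intro i hi
    have : m i * ∑ x, u i x = 0 := by
      rw [Finset.mul_sum]
      simp_rw [← ev']
      rw [Finset.sum_comm]
      simp_rw [← Finset.sum_mul, hLs]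
      simp [L1]
    exact (mul_eq_zero.1 this).resolve_left hi
  have hcst : ∀ i, m i = 0 → ∀ x y, u i x = u i y := by
    intro i hi
    apply harm_const G d hd hreg hc
    have := ev i; rw [hi, zero_smul] at this; exact this
  have hsq : ∀ i, m i = 0 → ∀ x y, u i x * u i y = 1 / (Fintype.card V : ℝ) := by
    intro i hi x y
    have h1 := o1 i i
    have : ∀ z, u i z * u i z = u i x * u i y := by
      intro z; rw [hcst i hi z x, hcst i hi y x]
    simp only [this, Finset.sum_const, Finset.card_univ, nsmul_eq_mul, if_true] at h1
    field_simp; linarith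
  have hproj : ∀ x y, ∑ i, (if m i = 0 then u i x * u i y else 0) = 1 / (Fintype.card V : ℝ) := by
    intro x y
    have e1 : ∑ i, u i x * ∑ y, u i y = 1 := by
      simp_rw [Finset.mul_sum]; rw [Finset.sum_comm]; simp [o2]
    have e2 : ∀ i, u i x * ∑ y, u i y = if m i = 0 then 1 else 0 := by
      intro i
      split_ifs with h
      · rw [Finset.mul_sum]; simp [hsq i h]
      · rw [hu0 i h, mul_zero]
    simp_rw [e2] at e1
    have e3 : ∀ i, (if m i = 0 then u i x * u i y else 0)
        = (if m i = 0 then 1 else 0) * (1 / (Fintype.card V : ℝ)) := by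
      intro i; split_ifs with h
      · rw [hsq i h, one_mul]
      · simp
    simp_rw [e3]; rw [← Finset.sum_mul, e1, one_mul]
  -- powers of P
  have hP : transP G d = 1 - L := by simp [hLdef]
  have hPu : ∀ i, Matrix.mulVec (transP G d) (u i) = (1 - m i) • u i := by
    intro i; rw [hP, Matrix.sub_mulVec, ev i, Matrix.one_mulVec, sub_smul, one_smul]
  have hPk : ∀ (k : ℕ) i, Matrix.mulVec (transP G d ^ k) (u i) = (1 - m i)^k • u i := by
    intro k i
    induction k with
    | zero => simp
    | succ k ih =>
      rw [pow_succ, ← Matrix.mulVec_mulVec, hPu, Matrix.mulVec_smul, ih, smul_smul]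
      congr 1; ring
  have hPk' : ∀ (k : ℕ) x y, (transP G d ^ k) x y = ∑ i, (1 - m i)^k * (u i x * u i y) := by
    intro k x y
    have h : ∀ i, (1 - m i)^k * (u i x * u i y) =
        ∑ z, (transP G d ^ k) x z * (u i z * u i y) := by
      intro i
      have := congrFun (hPk k i) x
      simp only [Matrix.mulVec, dotProduct, Pi.smul_apply, smul_eq_mul] at this
      rw [← mul_assoc, ← this, Finset.sum_mul]
      exact Finset.sum_congr rfl fun _ _ => by ring
    simp_rw [h]
    rw [Finset.sum_comm]
    simp_rw [← Finset.mul_sum, o2]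
    simp
  have hheat : ∀ t x y, heatK G d t x y = ∑ i, Real.exp (-(m i) * t) * (u i x * u i y) := by
    intro t x y
    unfold heatK
    refine HasSum.tsum_eq ?_
    have : ∀ i, HasSum (fun k : ℕ => Real.exp (-t) * t^k / (Nat.factorial k)
        * ((1 - m i)^k * (u i x * u i y))) (Real.exp (-(m i) * t) * (u i x * u i y)) := by
      intro i
      have h := NormedSpace.expSeries_div_hasSum_exp (t * (1 - m i))
      rw [← Real.exp_eq_exp_ℝ] at h
      have h2 := h.mul_left (Real.exp (-t) * (u i x * u i y))
      have e1 : (fun k : ℕ => Real.exp (-t) * t^k / (Nat.factorial k)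
        * ((1 - m i)^k * (u i x * u i y))) = fun k : ℕ =>
          Real.exp (-t) * (u i x * u i y) * ((t * (1 - m i)) ^ k / (Nat.factorial k)) := by
        funext k; rw [mul_pow]; ring
      have e2 : Real.exp (-(m i) * t) * (u i x * u i y) =
          Real.exp (-t) * (u i x * u i y) * Real.exp (t * (1 - m i)) := by
        rw [show -(m i) * t = -t + t * (1 - m i) by ring, Real.exp_add]; ring
      rw [e1, e2]; exact h2
    have h2 := hasSum_sum (s := Finset.univ) fun i _ => this i
    convert h2 using 1
    ext k; rw [hPk', Finset.mul_sum]
  let θ : V → ℝ := fun i => if m i = 0 then 0 else (m i)⁻¹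
  have hz : ∀ x y, zGreen G d (Fintype.card V) x y = ∑ i, θ i * (u i x * u i y) := by
    intro x y
    unfold zGreen
    have : ∀ t, heatK G d t x y - 1 / (Fintype.card V : ℝ) =
        ∑ i, (if m i = 0 then 0 else Real.exp (-(m i) * t) * (u i x * u i y)) := by
      intro t
      rw [hheat, ← hproj x y, ← Finset.sum_sub_distrib]
      refine Finset.sum_congr rfl fun i _ => ?_
      split_ifs with h
      · simp [h]
      · simp
    simp_rw [this]
    rw [integral_finsetSum]
    · refine Finset.sum_congr rfl fun i _ => ?_
      by_cases h : m i = 0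
      · simp [h, θ]
      · simp only [h, if_false, θ]
        rw [integral_mul_const, integral_exp_mul_Ioi
          (by have := (hm i).resolve_left h; linarith)]
        simp
    · intro i _
      by_cases h : m i = 0
      · simp [h]
      · simp only [h, if_false]
        exact (integrableOn_exp_mul_Ioi
          (by have := (hm i).resolve_left h; linarith) 0).mul_const _
  refine ⟨?_, ?_, ?_, ?_⟩
  · intro x y; simp only [Matrix.of_apply, hz]
    exact Finset.sum_congr rfl fun _ _ => by ring
  · intro x y
    change ((Matrix.of (zGreen G d (Fintype.card V))) * L) x y = _
    rw [Matrix.mul_apply]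
    simp only [Matrix.of_apply, hz, Finset.sum_mul]
    rw [Finset.sum_comm]
    have : ∀ i, ∑ j, θ i * (u i x * u i j) * L j y = u i x * u i y -
        (if m i = 0 then u i x * u i y else 0) := by
      intro i
      have h1 : ∑ j, θ i * (u i x * u i j) * L j y = θ i * u i x * ∑ j, L y j * u i j := by
        rw [Finset.mul_sum]
        exact Finset.sum_congr rfl fun j _ => by rw [hLs j y]; ring
      rw [h1, ev']
      by_cases h : m i = 0
      · simp [h]
      · simp only [h, if_false, θ]; field_simp; simp
    simp_rw [this]
    rw [Finset.sum_sub_distrib, o2, hproj]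
  · intro x
    simp only [Matrix.of_apply, hz]
    rw [Finset.sum_comm]
    refine Finset.sum_eq_zero fun i _ => ?_
    simp_rw [← mul_assoc]
    rw [← Finset.mul_sum]
    by_cases h : m i = 0
    · simp [h, θ]
    · rw [hu0 i h, mul_zero]
  · intro f
    have pars : ∀ c : V → ℝ, ∑ x, (∑ i, c i * u i x)^2 = ∑ i, c i ^ 2 := by
      intro c
      simp_rw [sq, Finset.sum_mul_sum]
      rw [Finset.sum_comm]
      refine Finset.sum_congr rfl fun i _ => ?_
      rw [Finset.sum_comm]
      have : ∀ j, ∑ x, c i * u i x * (c j * u j x) = c i * c j * (if i = j then 1 else 0) := by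
        intro j; rw [← o1, Finset.mul_sum]
        exact Finset.sum_congr rfl fun _ _ => by ring
      simp_rw [this]; simp
    let c : V → ℝ := fun i => ∑ y, u i y * f y
    have hf : ∀ x, f x = ∑ i, c i * u i x := by
      intro x
      simp only [c, Finset.sum_mul]
      rw [Finset.sum_comm]
      have : ∀ y, ∑ i, u i y * f y * u i x = f y * (if y = x then 1 else 0) := by
        intro y; rw [← o2, Finset.mul_sum]
        exact Finset.sum_congr rfl fun _ _ => by ring
      simp_rw [this]; simp
    have hK : ∀ x, Matrix.mulVec (Matrix.of (zGreen G d (Fintype.card V))) f x =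
        ∑ i, (θ i * c i) * u i x := by
      intro x
      simp only [Matrix.mulVec, dotProduct, Matrix.of_apply, hz, Finset.sum_mul, c, Finset.mul_sum]
      rw [Finset.sum_comm]
      exact Finset.sum_congr rfl fun _ _ => Finset.sum_congr rfl fun _ _ => by ring
    simp_rw [hK]
    rw [pars]
    have : ∑ x, f x ^ 2 = ∑ i, c i ^ 2 := by simp_rw [hf]; exact pars c
    rw [this, Finset.mul_sum]
    refine Finset.sum_le_sum fun i _ => ?_
    rw [mul_pow]
    refine mul_le_mul_of_nonneg_right ?_ (sq_nonneg _)
    by_cases h : m i = 0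
    · simp only [h, θ, if_true]; rw [zero_pow two_ne_zero]; positivity
    · simp only [h, θ, if_false]
      have h2 := (hm i).resolve_left h
      have : 0 < m i := by linarith
      gcongr

end GFF

namespace GFF
variable {V : Type} [Fintype V]

lemma green_inv' {G : SimpleGraph V} {d : ℕ} {β : ℝ} {K : Matrix V V ℝ}
    (hK : GreenProps G d β K) (f : V → ℝ) (x : V) :
    ∑ y, K x y * (Matrix.mulVec ((1 : Matrix V V ℝ) - transP G d) f y) =
      f x - (∑ y, f y) / (Fintype.card V : ℝ) := by
  have h1 : ∑ y, K x y * (Matrix.mulVec ((1 : Matrix V V ℝ) - transP G d) f y) =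
      Matrix.mulVec (K * ((1 : Matrix V V ℝ) - transP G d)) f x := by
    rw [← Matrix.mulVec_mulVec]; rfl
  rw [h1]
  simp only [Matrix.mulVec, dotProduct, hK.inv, sub_mul, Finset.sum_sub_distrib]
  simp [← Finset.mul_sum, div_eq_inv_mul]

lemma green_inv'' {G : SimpleGraph V} {d : ℕ} {β : ℝ} {K : Matrix V V ℝ}
    (hK : GreenProps G d β K) (f : V → ℝ) (x : V) :
    Matrix.mulVec ((1 : Matrix V V ℝ) - transP G d) (Matrix.mulVec K f) x =
      f x - (∑ y, f y) / (Fintype.card V : ℝ) := by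
  rw [Matrix.mulVec_mulVec]
  have hs : ∀ y, (((1 : Matrix V V ℝ) - transP G d) * K) x y =
      (K * ((1 : Matrix V V ℝ) - transP G d)) y x := by
    intro y
    simp only [Matrix.mul_apply]
    refine Finset.sum_congr rfl fun z _ => ?_
    rw [hK.symm z y, mul_comm]
    simp only [Matrix.sub_apply, Matrix.one_apply, transP_symm G d x z, eq_comm]
  simp only [Matrix.mulVec, dotProduct, hs, hK.inv, sub_mul, Finset.sum_sub_distrib]
  simp [← Finset.mul_sum, div_eq_inv_mul]

lemma green_lower {G : SimpleGraph V} {d : ℕ} (hd : 3 ≤ d) (hreg : IsReg G d)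
    {β : ℝ} {K : Matrix V V ℝ} [Nonempty V]
    (hK : GreenProps G d β K) (η : V → ℝ) :
    ∑ y, η y ^ 2 - (∑ y, η y) ^ 2 / (Fintype.card V : ℝ) ≤
      2 * ∑ y, η y * Matrix.mulVec K η y := by
  have hN : (0:ℝ) < Fintype.card V := by exact_mod_cast Fintype.card_pos
  set u := Matrix.mulVec K η with hu
  have hLu := green_inv'' hK η
  rw [← hu] at hLu
  set s := (∑ y, η y) / (Fintype.card V : ℝ) with hs
  have hsum : ∑ y, u y = 0 := by
    simp only [hu, Matrix.mulVec, dotProduct]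
    rw [Finset.sum_comm]
    refine Finset.sum_eq_zero fun y _ => ?_
    rw [← Finset.sum_mul]
    simp_rw [hK.symm _ y]; rw [hK.one, zero_mul]
  have hPu : ∀ x, Matrix.mulVec (transP G d) u x = u x - (η x - s) := by
    intro x; have := hLu x
    rw [Matrix.sub_mulVec, Matrix.one_mulVec, Pi.sub_apply] at this; linarith
  have hc := transP_contr G d hd hreg u
  simp_rw [hPu] at hc
  have e1 : ∑ x, (u x - (η x - s)) ^ 2 = ∑ x, u x ^ 2 - 2 * ∑ x, η x * u x + 2 * s * ∑ x, u x
      + ∑ x, η x ^ 2 - 2 * s * ∑ x, η x + ∑ x : V, s ^ 2 := by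
    simp only [Finset.mul_sum]
    simp only [← Finset.sum_add_distrib, ← Finset.sum_sub_distrib]
    exact Finset.sum_congr rfl fun _ _ => by ring
  have e2 : ∑ y, η y = s * (Fintype.card V : ℝ) := by rw [hs]; field_simp
  rw [e1, hsum, e2] at hc
  simp only [Finset.sum_const, Finset.card_univ, nsmul_eq_mul] at hc
  rw [e2]
  have : (s * (Fintype.card V : ℝ)) ^ 2 / (Fintype.card V : ℝ) = s^2 * (Fintype.card V : ℝ) := by
    field_simp
  rw [this]; nlinarith

lemma green_lowerA {G : SimpleGraph V} {d : ℕ} (hd : 3 ≤ d) (hreg : IsReg G d)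
    {β : ℝ} {K : Matrix V V ℝ} [Nonempty V]
    (hK : GreenProps G d β K) (A : Finset V) (c1 : ℝ)
    (hc1 : c1 ≤ 1 - (A.card : ℝ) / (Fintype.card V : ℝ)) (η : V → ℝ) (hη : ∀ y, y ∉ A → η y = 0) :
    c1 * ∑ y, η y ^ 2 ≤ 2 * ∑ y, η y * Matrix.mulVec K η y := by
  have hN : (0:ℝ) < Fintype.card V := by exact_mod_cast Fintype.card_pos
  have h := green_lower hd hreg hK η
  have h1 : ∑ y, η y = ∑ y ∈ A, η y :=
    (Finset.sum_subset (Finset.subset_univ A) fun y _ hy => hη y hy).symm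
  have h2 : ∑ y, η y ^ 2 = ∑ y ∈ A, η y ^ 2 :=
    (Finset.sum_subset (Finset.subset_univ A) fun y _ hy => by rw [hη y hy]; simp).symm
  have h3 : (∑ y, η y) ^ 2 ≤ A.card * ∑ y, η y ^ 2 := by
    rw [h1, h2]; exact sq_sum_le_card_mul_sum_sq
  have h4 : (∑ y, η y) ^ 2 / (Fintype.card V : ℝ) ≤
      (A.card : ℝ) / (Fintype.card V : ℝ) * ∑ y, η y ^ 2 := by
    rw [div_mul_eq_mul_div]; gcongr
  have h5 : 0 ≤ ∑ y, η y ^ 2 := Finset.sum_nonneg fun _ _ => sq_nonneg _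
  nlinarith

lemma krig_exists {G : SimpleGraph V} {d : ℕ} (hd : 3 ≤ d) (hreg : IsReg G d)
    {β : ℝ} {K : Matrix V V ℝ} [Nonempty V]
    (hK : GreenProps G d β K) (A : Finset V) (c1 : ℝ) (hc0 : 0 < c1)
    (hc1 : c1 ≤ 1 - (A.card : ℝ) / (Fintype.card V : ℝ)) (x : V) :
    ∃ κ : V → ℝ, (∀ y, y ∉ A → κ y = 0) ∧ ∀ a ∈ A, Matrix.mulVec K κ a = K a x := by
  let ext : (A → ℝ) →ₗ[ℝ] (V → ℝ) :=
    { toFun := fun f y => if h : y ∈ A then f ⟨y, h⟩ else 0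
      map_add' := by intro f g; funext y; by_cases h : y ∈ A <;> simp [h]
      map_smul' := by intro c f; funext y; by_cases h : y ∈ A <;> simp [h] }
  let T : (A → ℝ) →ₗ[ℝ] (A → ℝ) :=
    (LinearMap.funLeft ℝ ℝ (fun a : A => (a : V))) ∘ₗ K.mulVecLin ∘ₗ ext
  have hext : ∀ f : A → ℝ, ∀ y, y ∉ A → ext f y = 0 := by
    intro f y hy; simp [ext, hy]
  have hT : ∀ f (a : A), T f a = Matrix.mulVec K (ext f) a := fun f a => rfl
  have hinj : Function.Injective T := by
    rw [← LinearMap.ker_eq_bot, LinearMap.ker_eq_bot']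
    intro f hf
    have h := green_lowerA hd hreg hK A c1 hc1 (ext f) (hext f)
    have h0 : ∑ y, ext f y * Matrix.mulVec K (ext f) y = 0 := by
      refine Finset.sum_eq_zero fun y _ => ?_
      by_cases hy : y ∈ A
      · have := congrFun hf ⟨y, hy⟩
        rw [hT] at this
        rw [this]; simp
      · rw [hext f y hy, zero_mul]
    rw [h0, mul_zero] at h
    have h5 : ∑ y, ext f y ^ 2 ≤ 0 := by
      by_contra hh; push Not at hh; have := mul_pos hc0 hh; linarith
    have h6 := (Finset.sum_eq_zero_iff_of_nonneg (fun y _ => sq_nonneg (ext f y))).1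
      (le_antisymm h5 (Finset.sum_nonneg fun y _ => sq_nonneg (ext f y)))
    funext a
    have := h6 a (Finset.mem_univ _)
    have h7 : ext f a = 0 := by simpa using this
    have h8 : ext f a = f a := by simp [ext]
    rw [← h8, h7]; rfl
  obtain ⟨f, hf⟩ := (LinearMap.injective_iff_surjective.1 hinj) (fun a => K a x)
  refine ⟨ext f, hext f, fun a ha => ?_⟩
  have := congrFun hf ⟨a, ha⟩
  rwa [hT] at this

set_option maxHeartbeats 1000000 in
lemma krig_est {G : SimpleGraph V} {d : ℕ} (hd : 3 ≤ d) (hreg : IsReg G d)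
    {β : ℝ} {K : Matrix V V ℝ} [Nonempty V]
    (hK : GreenProps G d β K) (A : Finset V) (c1 : ℝ) (hc0 : 0 < c1)
    (hc1 : c1 ≤ 1 - (A.card : ℝ) / (Fintype.card V : ℝ)) (x xbar : V)
    (hxb : xbar ∈ A) (g e : V → ℝ)
    (hLg : ∀ y, Matrix.mulVec ((1 : Matrix V V ℝ) - transP G d) g y =
      (1 - (d:ℝ)⁻¹) * (if y = x then 1 else 0) - (d:ℝ)⁻¹ * (if y = xbar then 1 else 0) + e y)
    (hgA : ∀ a ∈ A, g a = 0) (hgx : g x = 1)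
    (δ : ℝ) (hδ : 0 ≤ δ)
    (hδ1 : A.card * ((∑ y, g y) / (Fintype.card V : ℝ)) ^ 2 ≤ δ ^ 2)
    (hδ2 : (β⁻¹) ^ 2 * ∑ y, e y ^ 2 ≤ δ ^ 2) :
    ∃ κ : V → ℝ, (∀ y, y ∉ A → κ y = 0) ∧ (∀ a ∈ A, Matrix.mulVec K κ a = K a x) ∧
      ∑ y, (κ y - ((d:ℝ) - 1)⁻¹ * (if y = xbar then 1 else 0)) ^ 2 ≤ (8 * δ / c1) ^ 2 ∧
      |K x x - Matrix.mulVec K κ x - (d:ℝ) / ((d:ℝ) - 1)| ≤ 8 * δ + 32 * δ ^ 2 / c1 := by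
  obtain ⟨κ, hκ0, hκ⟩ := krig_exists hd hreg hK A c1 hc0 hc1 x
  refine ⟨κ, hκ0, hκ, ?_⟩
  have hd3 : (3:ℝ) ≤ d := by exact_mod_cast hd
  set D : ℝ := (d:ℝ) / ((d:ℝ) - 1) with hD
  have hD2 : D ≤ 2 := by rw [hD, div_le_iff₀ (by linarith)]; linarith
  have hD0 : 0 ≤ D := div_nonneg (by linarith) (by linarith)
  set q : ℝ := ((d:ℝ) - 1)⁻¹ with hq
  have hq0 : 0 ≤ q := inv_nonneg.2 (by linarith)
  have hq1 : q ≤ 1 := inv_le_one_of_one_le₀ (by linarith)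
  set gb := (∑ y, g y) / (Fintype.card V : ℝ) with hgb
  set Ke := Matrix.mulVec K e with hKe
  let f : V → ℝ := fun y => K y x - q * K y xbar
  have hf : ∀ y, f y = D * (g y - gb - Ke y) := by
    intro y
    have h1 := green_inv' hK g y
    simp_rw [hLg] at h1
    have h2 : ∑ z, K y z * ((1 - (d:ℝ)⁻¹) * (if z = x then 1 else 0) -
        (d:ℝ)⁻¹ * (if z = xbar then 1 else 0) + e z) =
        (1 - (d:ℝ)⁻¹) * K y x - (d:ℝ)⁻¹ * K y xbar + Ke y := by
      simp only [mul_add, mul_sub, Finset.sum_add_distrib, Finset.sum_sub_distrib]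
      simp only [hKe, Matrix.mulVec, dotProduct]
      simp [mul_comm]
    rw [h2] at h1
    have h3 : g y - gb - Ke y = (1 - (d:ℝ)⁻¹) * K y x - (d:ℝ)⁻¹ * K y xbar := by
      rw [hgb]; linarith
    rw [h3]
    simp only [f, hD, hq]
    have : (d:ℝ) - 1 ≠ 0 := by linarith
    field_simp
  have hKe2 : ∑ y, Ke y ^ 2 ≤ δ ^ 2 := (hK.bd e).trans hδ2
  have hKey : ∀ y, |Ke y| ≤ δ := by
    intro y
    apply abs_le_of_sq_le_sq _ hδ
    exact (Finset.single_le_sum (f := fun y => Ke y ^ 2) (fun y _ => sq_nonneg (Ke y))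
      (Finset.mem_univ y)).trans hKe2
  have hgbd : |gb| ≤ δ := by
    apply abs_le_of_sq_le_sq _ hδ
    have : (1:ℝ) ≤ A.card := by exact_mod_cast Finset.card_pos.2 ⟨xbar, hxb⟩
    nlinarith [sq_nonneg gb]
  have hfA : ∀ a ∈ A, f a ^ 2 ≤ 8 * (gb ^ 2 + Ke a ^ 2) := by
    intro a ha
    rw [hf, hgA a ha]
    have : (D * (0 - gb - Ke a)) ^ 2 = D ^ 2 * (gb + Ke a) ^ 2 := by ring
    rw [this]
    have h4 : D ^ 2 ≤ 4 := by nlinarith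
    have h5 : (gb + Ke a) ^ 2 ≤ 2 * (gb ^ 2 + Ke a ^ 2) := by nlinarith [sq_nonneg (gb - Ke a)]
    calc _ ≤ 4 * (2 * (gb ^ 2 + Ke a ^ 2)) := by gcongr
      _ = _ := by ring
  have hr2 : ∑ a ∈ A, f a ^ 2 ≤ (4 * δ) ^ 2 := by
    calc _ ≤ ∑ a ∈ A, 8 * (gb ^ 2 + Ke a ^ 2) := Finset.sum_le_sum hfA
      _ = 8 * (A.card * gb ^ 2) + 8 * ∑ a ∈ A, Ke a ^ 2 := by
        simp [mul_add, Finset.sum_add_distrib, Finset.mul_sum]; ring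
      _ ≤ 8 * δ ^ 2 + 8 * δ ^ 2 := by
        have : ∑ a ∈ A, Ke a ^ 2 ≤ ∑ a, Ke a ^ 2 :=
          Finset.sum_le_sum_of_subset_of_nonneg (Finset.subset_univ _) fun _ _ _ => sq_nonneg _
        linarith
      _ = _ := by ring
  have hra : |f xbar| ≤ 4 * δ := by
    apply abs_le_of_sq_le_sq _ (by positivity)
    exact (Finset.single_le_sum (f := fun y => f y ^ 2) (fun y _ => sq_nonneg (f y)) hxb).trans hr2
  let η : V → ℝ := fun y => κ y - q * (if y = xbar then 1 else 0)
  have hη0 : ∀ y, y ∉ A → η y = 0 := by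
    intro y hy
    have : y ≠ xbar := fun h => hy (h ▸ hxb)
    simp [η, hκ0 y hy, this]
  have hKη : ∀ y, Matrix.mulVec K η y = Matrix.mulVec K κ y - q * K y xbar := by
    intro y
    simp [η, Matrix.mulVec, dotProduct, mul_sub, mul_comm]
  have hKηA : ∀ a ∈ A, Matrix.mulVec K η a = f a := by
    intro a ha; rw [hKη, hκ a ha]
  have hip : ∑ y, η y * Matrix.mulVec K η y = ∑ a ∈ A, η a * f a := by
    rw [← Finset.sum_subset (Finset.subset_univ A) fun y _ hy => by rw [hη0 y hy, zero_mul]]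
    exact Finset.sum_congr rfl fun a ha => by rw [hKηA a ha]
  have hη2 : ∑ y, η y ^ 2 = ∑ y ∈ A, η y ^ 2 :=
    (Finset.sum_subset (Finset.subset_univ A) fun y _ hy => by rw [hη0 y hy]; simp).symm
  have hcs := Finset.sum_mul_sq_le_sq_mul_sq A η f
  have hlow := green_lowerA hd hreg hK A c1 hc1 η hη0
  rw [hip, hη2] at hlow
  set I := ∑ a ∈ A, η a * f a
  set E := ∑ y ∈ A, η y ^ 2
  set R := ∑ a ∈ A, f a ^ 2
  have hE0 : 0 ≤ E := Finset.sum_nonneg fun _ _ => sq_nonneg _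
  have hI0 : 0 ≤ I := by nlinarith [mul_nonneg hc0.le hE0]
  have hEb : E ≤ (8 * δ / c1) ^ 2 := by
    have h1 : (c1 * E) ^ 2 ≤ 4 * (E * R) := by
      have := pow_le_pow_left₀ (mul_nonneg hc0.le hE0) hlow 2
      nlinarith
    rcases hE0.eq_or_lt with h | h
    · rw [← h]; positivity
    · have h2 : c1 ^ 2 * E ≤ 4 * R := by
        have : E * (c1 ^ 2 * E) ≤ E * (4 * R) := by nlinarith
        exact le_of_mul_le_mul_left this h
      rw [div_pow, le_div_iff₀ (by positivity)]
      nlinarith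
  have hIb : |I| ≤ 32 * δ ^ 2 / c1 := by
    apply abs_le_of_sq_le_sq _ (by positivity)
    calc I ^ 2 ≤ E * R := hcs
      _ ≤ (8 * δ / c1) ^ 2 * (4 * δ) ^ 2 := by gcongr
      _ = _ := by field_simp; ring
  constructor
  · have : ∑ y, (κ y - q * (if y = xbar then 1 else 0)) ^ 2 = E := hη2
    rw [this]; exact hEb
  · have hKηx : Matrix.mulVec K η x = I + q * f xbar := by
      rw [← hKηA xbar hxb]
      simp only [Matrix.mulVec, dotProduct, Finset.mul_sum]
      rw [← Finset.sum_subset (Finset.subset_univ A) fun y _ hy => by rw [hη0 y hy, mul_zero],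
        ← Finset.sum_subset (Finset.subset_univ A)
          (f := fun i => q * (K xbar i * η i)) fun y _ hy => by rw [hη0 y hy]; ring,
        ← Finset.sum_add_distrib]
      refine Finset.sum_congr rfl fun a _ => ?_
      simp only [f]; rw [hK.symm x a, hK.symm xbar a]; ring
    have h1 : K x x - Matrix.mulVec K κ x - D = D * (- gb - Ke x) - I - q * f xbar := by
      have h2 := hf x
      have h3 := hKη x
      simp only [f, hgx] at h2
      rw [hKηx] at h3
      linarith
    rw [h1]
    have b1 : |D * (-gb - Ke x)| ≤ 4 * δ := by
      rw [abs_mul, abs_of_nonneg hD0]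
      have : |-gb - Ke x| ≤ δ + δ := by
        refine (abs_sub _ _).trans ?_; rw [abs_neg]; exact add_le_add hgbd (hKey x)
      calc D * |-gb - Ke x| ≤ 2 * (δ + δ) := by gcongr
        _ = 4 * δ := by ring
    have b2 : |q * f xbar| ≤ 4 * δ := by
      rw [abs_mul, abs_of_nonneg hq0]
      calc q * |f xbar| ≤ 1 * (4 * δ) := by gcongr
        _ = 4 * δ := by ring
    calc _ ≤ |D * (-gb - Ke x) - I| + |q * f xbar| := abs_sub _ _
      _ ≤ |D * (-gb - Ke x)| + |I| + |q * f xbar| := by gcongr; exact abs_sub _ _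
      _ ≤ _ := by linarith

end GFF

namespace GFF
variable {V : Type} [Fintype V]

lemma tree_parent {W : Type} (H : SimpleGraph W) (hH : H.IsTree) (r z : W) (hz : z ≠ r) :
    ∃ p, H.Adj z p ∧ H.dist r p + 1 = H.dist r z ∧
      ∀ w, H.Adj z w → w ≠ p → H.dist r w = H.dist r z + 1 := by
  obtain ⟨p, hp, hpl⟩ := hH.connected.exists_path_of_dist r z
  have hnil : ¬ p.Nil := fun h => hz h.eq.symm
  have hadj := p.adj_penultimate hnil
  have hl : p.dropLast.length + 1 = p.length := by
    rw [← SimpleGraph.Walk.length_concat _ hadj, SimpleGraph.Walk.concat_dropLast]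
  have hle := SimpleGraph.dist_le p.dropLast
  refine ⟨p.penultimate, hadj.symm, ?_, ?_⟩
  · rcases hH.dist_eq_dist_add_one_of_adj r hadj with h | h <;> omega
  · intro w hw hne
    rcases hH.dist_eq_dist_add_one_of_adj r hw with h | h
    · exfalso
      obtain ⟨q, hq, hql⟩ := hH.connected.exists_path_of_dist r w
      have hzq : z ∉ q.support := by
        intro hmem
        have h1 := SimpleGraph.dist_le (q.takeUntil z hmem)
        have h2 := q.length_takeUntil_le_length hmem
        omega
      have := hH.isAcyclic.mem_support_of_ne_mem_support_of_adj_of_isPath hp hq hw hzq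
      exact hne (hH.isAcyclic.eq_penultimate_of_adj_end hp hw this)
    · exact h

lemma tree_of_tx (G : SimpleGraph V) (F : Set V) (hne : F.Nonempty)
    (hc : (G.induce F).Connected) (ht : TxZero G F) : (G.induce F).IsTree := by
  rw [SimpleGraph.isTree_iff_connected_and_card]
  refine ⟨hc, ?_⟩
  have h1 : adjPairs G F = Fintype.card (G.induce F).Dart := by
    unfold adjPairs
    rw [← Nat.card_coe_set_eq, ← Nat.card_eq_fintype_card]
    refine Nat.card_congr ?_
    exact
      { toFun := fun p => ⟨(⟨p.1.1, p.2.1⟩, ⟨p.1.2, p.2.2.1⟩), p.2.2.2⟩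
        invFun := fun e => ⟨(e.fst, e.snd), e.fst.2, e.snd.2, e.adj⟩
        left_inv := fun p => rfl
        right_inv := fun e => rfl }
  rw [SimpleGraph.dart_card_eq_twice_card_edges] at h1
  unfold TxZero at ht
  have h2 : Nat.card (G.induce F).edgeSet = (G.induce F).edgeFinset.card := by
    rw [Nat.card_eq_fintype_card, SimpleGraph.edgeFinset_card]
  rw [h2, Nat.card_coe_set_eq]
  have : 0 < F.ncard := (Set.ncard_pos (Set.toFinite F)).2 hne
  omega

/-- local tree structure at a good vertex -/
structure TS (G : SimpleGraph V) (A : Set V) (s : ℕ) (x xbar : V) (S : Set V) (l : V → ℕ)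
    (par : V → V) : Prop where
  xS : x ∈ S
  lx : l x = 0
  px : par x = xbar
  xb : xbar ∈ A
  SA : ∀ z ∈ S, z ∉ A
  lt : ∀ z ∈ S, l z < s
  adj : ∀ z ∈ S, G.Adj z (par z)
  pS : ∀ z ∈ S, z ≠ x → par z ∈ S ∧ l (par z) + 1 = l z
  ch : ∀ z ∈ S, ∀ w, G.Adj z w → w ≠ par z → w ∈ S → l w = l z + 1
  full : ∀ z ∈ S, ∀ w, G.Adj z w → w ≠ par z → l z + 1 < s → w ∈ S
  bd : ∀ z ∈ S, ∀ w ∈ A, G.Adj z w → z = x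

lemma tree_struct (G : SimpleGraph V) (hc : G.Connected) (A : Set V) (s : ℕ) (hs : 1 ≤ s)
    (x xbar : V) (hgood : GoodVertex G A s x) (hxb : xbar ∈ A) (hadj : G.Adj x xbar) :
    ∃ S l par, TS G A s x xbar S l par := by
  obtain ⟨hxA, huniq, htx, hsep⟩ := hgood
  set F := Fset G A s x with hF
  have hxs : x ∈ sball G A s :=
    ⟨xbar, hxb, by rw [SimpleGraph.dist_eq_one_iff_adj.2 hadj.symm]; exact hs⟩
  have hxF : x ∈ F := ⟨SimpleGraph.Walk.nil, by simp [hxs, hxA]⟩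
  have hsupp : ∀ z (p : G.Walk x z), (∀ v ∈ p.support, v ∈ sball G A s ∧ v ∉ A) →
      ∀ v ∈ p.support, v ∈ F := by
    intro z p hp v hv
    exact ⟨p.takeUntil v hv, fun w hw => hp w (p.support_takeUntil_subset_support hv hw)⟩
  have hFA : ∀ z ∈ F, z ∈ sball G A s ∧ z ∉ A := by
    rintro z ⟨p, hp⟩; exact hp z p.end_mem_support
  have hconn : (G.induce F).Connected := by
    rw [SimpleGraph.connected_iff_exists_forall_reachable]
    refine ⟨⟨x, hxF⟩, ?_⟩
    rintro ⟨z, hz⟩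
    obtain ⟨p, hp⟩ := hz
    exact ⟨p.induce F (hsupp z p hp)⟩
  have hT := tree_of_tx G F ⟨x, hxF⟩ hconn htx
  let r : F := ⟨x, hxF⟩
  have hpar : ∀ z : F, ∃ p : F, z ≠ r → ((G.induce F).Adj z p ∧
      (G.induce F).dist r p + 1 = (G.induce F).dist r z ∧
      ∀ w, (G.induce F).Adj z w → w ≠ p → (G.induce F).dist r w = (G.induce F).dist r z + 1) := by
    intro z
    by_cases h : z = r
    · exact ⟨z, fun h' => absurd h h'⟩
    · obtain ⟨p, hp⟩ := tree_parent _ hT r z h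
      exact ⟨p, fun _ => hp⟩
  choose P hP using hpar
  let l : V → ℕ := fun z => if h : z ∈ F then (G.induce F).dist r ⟨z, h⟩ else 0
  have hl : ∀ z (h : z ∈ F), l z = (G.induce F).dist r ⟨z, h⟩ := by
    intro z h; simp [l, h]
  let par : V → V := fun z => if z = x then xbar else if h : z ∈ F then P ⟨z, h⟩ else z
  have hpx : par x = xbar := by simp [par]
  have hpz : ∀ z (h : z ∈ F), z ≠ x → par z = P ⟨z, h⟩ := by
    intro z h hz; simp [par, hz, h]
  have hbd : ∀ z ∈ F, ∀ w ∈ A, G.Adj z w → z = x := by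
    intro z hz w hw hzw
    by_contra hne
    obtain ⟨p, hp⟩ := hz
    have hp' : ∀ v ∈ p.reverse.support, v ∈ sball G A s ∧ v ∉ A := by
      intro v hv; apply hp; simpa using hv
    obtain ⟨v, hv, hvs⟩ := hsep z (hp z p.end_mem_support).2 ⟨w, hw, hzw⟩ hne p.reverse
      (fun v hv => (hp' v hv).2)
    exact hvs (hp' v hv).1
  have hne : ∀ z (h : z ∈ F), z ≠ x → (⟨z, h⟩ : F) ≠ r := by
    intro z h hz e; exact hz (congrArg Subtype.val e)
  refine ⟨{z | z ∈ F ∧ l z < s}, l, par, ?_⟩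
  have lx : l x = 0 := by rw [hl x hxF]; exact SimpleGraph.dist_self
  have h01 : ∀ w (hw : w ∈ F), G.Adj x w → l w = 1 := by
    intro w hw hxw
    rw [hl w hw]; exact SimpleGraph.dist_eq_one_iff_adj.2 hxw
  refine ⟨⟨hxF, by omega⟩, lx, hpx, hxb, fun z hz => (hFA z hz.1).2, fun z hz => hz.2, ?_, ?_, ?_, ?_,
    fun z hz => hbd z hz.1⟩
  · rintro z ⟨hz, -⟩
    by_cases h : z = x
    · rw [h, hpx]; exact hadj
    · rw [hpz z hz h]; exact (hP _ (hne z hz h)).1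
  · rintro z ⟨hz, hzs⟩ h
    have h2 := (hP _ (hne z hz h)).2.1
    rw [hpz z hz h]
    have e : l (P ⟨z, hz⟩) + 1 = l z := by
      rw [hl _ (P ⟨z, hz⟩).2, hl z hz]; exact h2
    exact ⟨⟨(P ⟨z, hz⟩).2, by omega⟩, e⟩
  · rintro z ⟨hz, hzs⟩ w hzw hwp ⟨hw, -⟩
    by_cases h : z = x
    · subst h; rw [h01 w hw hzw, lx]
    · have h2 := (hP _ (hne z hz h)).2.2 ⟨w, hw⟩ hzw (by
        intro e; apply hwp; rw [hpz z hz h, ← e])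
      rw [hl w hw, hl z hz]; exact h2
  · rintro z ⟨hz, hzs⟩ w hzw hwp hlt
    have hwA : w ∉ A := by
      intro hwA
      have := hbd z hz w hwA hzw
      subst this
      rw [hpx] at hwp
      exact hwp (huniq.unique ⟨hwA, hzw⟩ ⟨hxb, hadj⟩)
    have hws : w ∈ sball G A s := by
      refine ⟨xbar, hxb, ?_⟩
      obtain ⟨q, hq⟩ := hconn.exists_walk_length_eq_dist r ⟨z, hz⟩
      obtain ⟨q', hq'⟩ : ∃ q' : G.Walk x z, q'.length = q.length :=
        ⟨q.map (SimpleGraph.Embedding.induce F).toHom, SimpleGraph.Walk.length_map _ _⟩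
      have h1 := SimpleGraph.dist_le (SimpleGraph.Walk.cons hadj.symm (q'.concat hzw))
      have h2 := hl z hz
      rw [← hq] at h2
      simp only [SimpleGraph.Walk.length_cons, SimpleGraph.Walk.length_concat] at h1
      omega
    have hw : w ∈ F := by
      obtain ⟨p, hp⟩ := hz
      refine ⟨p.concat hzw, ?_⟩
      intro v hv
      rw [SimpleGraph.Walk.support_concat] at hv
      simp only [List.mem_append, List.mem_singleton] at hv
      rcases hv with hv | rfl
      · exact hp v hv
      · exact ⟨hws, hwA⟩
    refine ⟨hw, ?_⟩
    by_cases h : z = x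
    · subst h; rw [h01 w hw hzw]; omega
    · have h2 := (hP _ (hne z hz h)).2.2 ⟨w, hw⟩ hzw (by
        intro e; apply hwp; rw [hpz z hz h, ← e])
      rw [← hl w hw, ← hl z hz] at h2; omega
end GFF

namespace GFF
variable {V : Type} [Fintype V]

lemma card_nbr (G : SimpleGraph V) (d : ℕ) (hreg : IsReg G d) (x : V) :
    (Finset.univ.filter (fun y => G.Adj x y)).card = d := by
  have := sum_nbr G d hreg x
  rw [Finset.sum_boole] at this
  exact_mod_cast this

lemma transP_mulVec (G : SimpleGraph V) (d : ℕ) (f : V → ℝ) (x : V) :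
    Matrix.mulVec (transP G d) f x =
      (d:ℝ)⁻¹ * ∑ y ∈ Finset.univ.filter (fun y => G.Adj x y), f y := by
  simp only [Matrix.mulVec, dotProduct, transP, Matrix.of_apply, Finset.mul_sum, Finset.sum_filter]
  exact Finset.sum_congr rfl fun y _ => by split_ifs <;> simp

lemma level_card {G : SimpleGraph V} {d : ℕ} (hreg : IsReg G d)
    {A : Set V} {s : ℕ} {x xbar : V} {S : Set V} {l : V → ℕ} {par : V → V}
    (h : TS G A s x xbar S l par) (j : ℕ) :
    (Finset.univ.filter (fun z => z ∈ S ∧ l z = j)).card ≤ (d - 1) ^ j := by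
  induction j with
  | zero =>
    rw [pow_zero, Finset.card_le_one]
    have : ∀ z, z ∈ S ∧ l z = 0 → z = x := by
      rintro z ⟨hz, hl⟩
      by_contra hne
      have := (h.pS z hz hne).2; omega
    intro a ha b hb
    rw [this a (Finset.mem_filter.1 ha).2, this b (Finset.mem_filter.1 hb).2]
  | succ j ih =>
    have hne : ∀ z, l z = j + 1 → z ≠ x := by
      rintro z hz rfl; rw [h.lx] at hz; omega
    have h1 := Finset.card_le_mul_card_image_of_maps_to
      (s := Finset.univ.filter (fun z => z ∈ S ∧ l z = j + 1))
      (t := Finset.univ.filter (fun z => z ∈ S ∧ l z = j)) (f := par)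
      (by
        intro z hz
        simp only [Finset.mem_filter, Finset.mem_univ, true_and] at hz ⊢
        have := h.pS z hz.1 (hne z hz.2)
        exact ⟨this.1, by omega⟩) (d - 1)
      (by
        intro z hz
        simp only [Finset.mem_filter, Finset.mem_univ, true_and] at hz
        have hsub : (Finset.univ.filter (fun z => z ∈ S ∧ l z = j + 1)).filter (fun w => par w = z)
            ⊆ (Finset.univ.filter (fun y => G.Adj z y)).erase (par z) := by
          intro w hw
          simp only [Finset.mem_filter, Finset.mem_univ, true_and, Finset.mem_erase] at hw ⊢
          obtain ⟨⟨hwS, hwl⟩, hwp⟩ := hw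
          refine ⟨?_, ?_⟩
          · rintro rfl
            by_cases hzx : z = x
            · rw [hzx, h.px] at hwS; exact h.SA _ hwS h.xb
            · have := (h.pS z hz.1 hzx).2; omega
          · have := h.adj w hwS; rw [hwp] at this; exact this.symm
        refine (Finset.card_le_card hsub).trans ?_
        rw [Finset.card_erase_of_mem (by simpa using h.adj z hz.1), card_nbr G d hreg])
    calc _ ≤ (d - 1) * _ := h1
      _ ≤ (d - 1) * (d - 1) ^ j := Nat.mul_le_mul_left _ ih
      _ = _ := by rw [pow_succ, mul_comm]

lemma test_fun {G : SimpleGraph V} {d : ℕ} (hd : 3 ≤ d) (hreg : IsReg G d)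
    {A : Set V} {s : ℕ} (hs : 1 ≤ s) {x xbar : V} {S : Set V} {l : V → ℕ} {par : V → V}
    (h : TS G A s x xbar S l par) :
    ∃ g e : V → ℝ,
      (∀ y, Matrix.mulVec ((1 : Matrix V V ℝ) - transP G d) g y =
      (1 - (d:ℝ)⁻¹) * (if y = x then 1 else 0) - (d:ℝ)⁻¹ * (if y = xbar then 1 else 0) + e y) ∧
      (∀ a ∈ A, g a = 0) ∧ g x = 1 ∧ 0 ≤ ∑ y, g y ∧ ∑ y, g y ≤ s ∧
      ∑ y, e y ^ 2 ≤ 4 * (((d:ℝ) - 1)⁻¹) ^ (s - 1) := by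
  have hd3 : (3:ℝ) ≤ d := by exact_mod_cast hd
  have hd1 : (0:ℝ) < (d:ℝ) - 1 := by linarith
  set q : ℝ := ((d:ℝ) - 1)⁻¹ with hq
  have hq0 : 0 < q := inv_pos.2 hd1
  have hqd : ((d:ℝ) - 1) * q = 1 := by rw [hq]; field_simp
  let g : V → ℝ := fun y => if y ∈ S then q ^ (l y) else 0
  let k : V → ℝ := fun y => if y ∈ S ∧ l y = s - 1 then q ^ (s - 1) else 0
  have gS : ∀ y ∈ S, g y = q ^ (l y) := fun y hy => by simp [g, hy]
  have gN : ∀ y, y ∉ S → g y = 0 := fun y hy => by simp [g, hy]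
  have k0 : ∀ y, 0 ≤ k y := by intro y; simp only [k]; split_ifs <;> positivity
  have g0 : ∀ y, 0 ≤ g y := by intro y; simp only [g]; split_ifs <;> positivity
  have hxbS : xbar ∉ S := fun hh => h.SA _ hh h.xb
  let e : V → ℝ := fun y => Matrix.mulVec ((1 : Matrix V V ℝ) - transP G d) g y -
    ((1 - (d:ℝ)⁻¹) * (if y = x then 1 else 0) - (d:ℝ)⁻¹ * (if y = xbar then 1 else 0))
  have hLg : ∀ y, Matrix.mulVec ((1 : Matrix V V ℝ) - transP G d) g y =
      g y - (d:ℝ)⁻¹ * ∑ w ∈ Finset.univ.filter (fun w => G.Adj y w), g w := by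
    intro y; rw [Matrix.sub_mulVec, Matrix.one_mulVec, Pi.sub_apply, transP_mulVec]
  have hPk0 : ∀ y, 0 ≤ Matrix.mulVec (transP G d) k y := by
    intro y; rw [transP_mulVec]
    exact mul_nonneg (by positivity) (Finset.sum_nonneg fun w _ => k0 w)
  have heb : ∀ y, |e y| ≤ k y + Matrix.mulVec (transP G d) k y := by
    intro y
    by_cases hy : y ∈ S
    · have hyxb : y ≠ xbar := fun hh => hxbS (hh ▸ hy)
      have hsplit := Finset.add_sum_erase (Finset.univ.filter (fun w => G.Adj y w)) g
        (a := par y) (by simpa using h.adj y hy)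
      have hcard : ((Finset.univ.filter (fun w => G.Adj y w)).erase (par y)).card = d - 1 := by
        rw [Finset.card_erase_of_mem (by simpa using h.adj y hy), card_nbr G d hreg]
      have hrest : ∑ w ∈ (Finset.univ.filter (fun w => G.Adj y w)).erase (par y), g w =
          q ^ (l y) - k y := by
        by_cases hl : l y + 1 < s
        · have hk : k y = 0 := by
            simp only [k]; rw [if_neg]; rintro ⟨-, h2⟩; omega
          have : ∀ w ∈ (Finset.univ.filter (fun w => G.Adj y w)).erase (par y),
              g w = q ^ (l y + 1) := by
            intro w hw
            simp only [Finset.mem_filter, Finset.mem_univ, true_and, Finset.mem_erase] at hw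
            have hwS := h.full y hy w hw.2 hw.1 hl
            rw [gS w hwS, h.ch y hy w hw.2 hw.1 hwS]
          rw [Finset.sum_congr rfl this, Finset.sum_const, hcard, hk, nsmul_eq_mul,
            Nat.cast_sub (by omega), Nat.cast_one, pow_succ]
          linear_combination q ^ (l y) * hqd
        · have hl' : l y = s - 1 := by have := h.lt y hy; omega
          have hk : k y = q ^ (l y) := by
            simp only [k]; rw [if_pos ⟨hy, hl'⟩, hl']
          rw [hk, sub_self]
          refine Finset.sum_eq_zero fun w hw => ?_
          simp only [Finset.mem_filter, Finset.mem_univ, true_and, Finset.mem_erase] at hw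
          apply gN
          intro hwS
          have h1 := h.ch y hy w hw.2 hw.1 hwS
          have h2 := h.lt w hwS
          omega
      have hee : e y = (d:ℝ)⁻¹ * k y := by
        simp only [e, hLg, if_neg hyxb]
        rw [← hsplit, hrest, gS y hy]
        by_cases hx : y = x
        · subst hx
          rw [h.px, gN _ hxbS, h.lx]; simp; ring
        · obtain ⟨p1, p2⟩ := h.pS y hy hx
          rw [gS _ p1, if_neg hx, ← p2, pow_succ]
          have hd0 : (d:ℝ) ≠ 0 := by linarith
          field_simp
          linear_combination (q ^ l (par y)) * hqd
      rw [hee, abs_of_nonneg (mul_nonneg (by positivity) (k0 y))]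
      have : (d:ℝ)⁻¹ ≤ 1 := inv_le_one_of_one_le₀ (by linarith)
      nlinarith [k0 y, hPk0 y]
    · have hyx : y ≠ x := fun hh => hy (hh ▸ h.xS)
      by_cases hyb : y = xbar
      · have : e y = 0 := by
          simp only [e, hLg, if_neg hyx, if_pos hyb, gN y hy]
          rw [Finset.sum_eq_single x]
          · rw [gS x h.xS, h.lx]; simp
          · intro w hw hwx
            simp only [Finset.mem_filter, Finset.mem_univ, true_and] at hw
            apply gN
            intro hwS
            exact hwx (h.bd w hwS xbar h.xb (hyb ▸ hw.symm))
          · intro hh; exfalso; apply hh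
            simp only [Finset.mem_filter, Finset.mem_univ, true_and]
            have := h.adj x h.xS
            rw [h.px] at this; rw [hyb]; exact this.symm
        rw [this, abs_zero]; exact add_nonneg (k0 y) (hPk0 y)
      · have : e y = - Matrix.mulVec (transP G d) k y := by
          simp only [e, hLg, if_neg hyx, if_neg hyb, gN y hy, transP_mulVec]
          have : ∀ w ∈ Finset.univ.filter (fun w => G.Adj y w), g w = k w := by
            intro w hw
            simp only [Finset.mem_filter, Finset.mem_univ, true_and] at hw
            by_cases hwS : w ∈ S
            · have hl : l w = s - 1 := by
                by_contra hne
                have hlt := h.lt w hwS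
                by_cases hp : y = par w
                · by_cases hwx : w = x
                  · rw [hwx, h.px] at hp; exact hyb hp
                  · exact hy (hp ▸ (h.pS w hwS hwx).1)
                · exact hy (h.full w hwS y hw.symm hp (by omega))
              rw [gS w hwS]; simp only [k]; rw [if_pos ⟨hwS, hl⟩, hl]
            · rw [gN w hwS]; simp [k, hwS]
          rw [Finset.sum_congr rfl this]; ring
        rw [this, abs_neg, abs_of_nonneg (hPk0 y)]
        linarith [k0 y]
  refine ⟨g, e, ?_, ?_, ?_, Finset.sum_nonneg fun y _ => g0 y, ?_, ?_⟩
  · intro y; simp only [e]; ring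
  · intro a ha; exact gN a fun hh => h.SA a hh ha
  · rw [gS x h.xS, h.lx, pow_zero]
  · have h1 : ∀ y, g y = ∑ j ∈ Finset.range s, if y ∈ S ∧ l y = j then q ^ j else 0 := by
      intro y
      by_cases hy : y ∈ S
      · rw [gS y hy]; simp [hy, h.lt y hy]
      · rw [gN y hy]; simp [hy]
    simp_rw [h1]
    rw [Finset.sum_comm]
    calc _ ≤ ∑ j ∈ Finset.range s, (1:ℝ) := by
          refine Finset.sum_le_sum fun j _ => ?_
          rw [← Finset.sum_filter, Finset.sum_const, nsmul_eq_mul]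
          have : ((Finset.univ.filter (fun z => z ∈ S ∧ l z = j)).card : ℝ) ≤ ((d:ℝ) - 1) ^ j := by
            have := level_card hreg h j
            have h2 : (((d - 1 : ℕ) : ℝ)) = (d:ℝ) - 1 := by
              rw [Nat.cast_sub (by omega), Nat.cast_one]
            rw [← h2]; exact_mod_cast this
          calc _ ≤ ((d:ℝ) - 1) ^ j * q ^ j := by gcongr
            _ = 1 := by rw [← mul_pow, hqd, one_pow]
      _ = s := by simp
  · have hk2 : ∑ y, k y ^ 2 ≤ q ^ (s - 1) := by
      have : ∀ y, k y ^ 2 = if y ∈ S ∧ l y = s - 1 then (q ^ (s - 1)) ^ 2 else 0 := by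
        intro y; simp only [k]; split_ifs <;> simp
      simp_rw [this]
      rw [← Finset.sum_filter, Finset.sum_const, nsmul_eq_mul]
      have : ((Finset.univ.filter (fun z => z ∈ S ∧ l z = s - 1)).card : ℝ)
          ≤ ((d:ℝ) - 1) ^ (s - 1) := by
        have := level_card hreg h (s - 1)
        have h2 : (((d - 1 : ℕ) : ℝ)) = (d:ℝ) - 1 := by
          rw [Nat.cast_sub (by omega), Nat.cast_one]
        rw [← h2]; exact_mod_cast this
      calc _ ≤ ((d:ℝ) - 1) ^ (s - 1) * (q ^ (s - 1)) ^ 2 := by gcongr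
        _ = (((d:ℝ) - 1) * q) ^ (s - 1) * q ^ (s - 1) := by rw [mul_pow]; ring
        _ = _ := by rw [hqd, one_pow, one_mul]
    have hPk := transP_contr G d hd hreg k
    calc ∑ y, e y ^ 2 ≤ ∑ y, (2 * k y ^ 2 + 2 * (Matrix.mulVec (transP G d) k y) ^ 2) := by
          refine Finset.sum_le_sum fun y _ => ?_
          have h1 := pow_le_pow_left₀ (abs_nonneg _) (heb y) 2
          rw [sq_abs] at h1
          nlinarith [sq_nonneg (k y - Matrix.mulVec (transP G d) k y)]
      _ = 2 * ∑ y, k y ^ 2 + 2 * ∑ y, (Matrix.mulVec (transP G d) k y) ^ 2 := by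
          rw [Finset.sum_add_distrib, Finset.mul_sum, Finset.mul_sum]
      _ ≤ _ := by linarith
end GFF

namespace GFF

variable {V : Type} [Fintype V]

/-- linear form -/
noncomputable def lf (c : V → ℝ) : (V → ℝ) →L[ℝ] ℝ :=
  ∑ i, c i • ContinuousLinearMap.proj (R := ℝ) (φ := fun _ : V => ℝ) i

theorem lf_apply (c ω : V → ℝ) : lf c ω = ∑ i, c i * ω i := by
  simp [lf]

theorem field_map {μ : Measure (V → ℝ)} {K : V → V → ℝ} (hμ : IsGaussianField μ K)
    (c : V → ℝ) :
    μ.map (lf c) = gaussianReal 0 (Real.toNNReal (dotProduct c (Matrix.mulVec (Matrix.of K) c))) := by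
  have h := hμ.2 (Finsupp.equivFunOnFinite.symm c)
  have h1 : (fun ω : V → ℝ => ∑ i ∈ (Finsupp.equivFunOnFinite.symm c).support,
      (Finsupp.equivFunOnFinite.symm c) i * ω i) = lf c := by
    funext ω
    rw [lf_apply]
    apply Finset.sum_subset (Finset.subset_univ _)
    intro i _ hi
    rw [Finsupp.notMem_support_iff] at hi
    rw [hi, zero_mul]
  rw [h1] at h
  rw [h]
  congr 2
  unfold dotProduct Matrix.mulVec dotProduct
  have h2 : ∀ i, i ∉ (Finsupp.equivFunOnFinite.symm c).support → c i = 0 := by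
    intro i hi
    rw [Finsupp.notMem_support_iff] at hi
    simpa using hi
  rw [← Finset.sum_subset (Finset.subset_univ (Finsupp.equivFunOnFinite.symm c).support)]
  · apply Finset.sum_congr rfl
    intro i _
    rw [← Finset.sum_subset (Finset.subset_univ (Finsupp.equivFunOnFinite.symm c).support)]
    · rw [Finset.mul_sum]
      apply Finset.sum_congr rfl
      intro j _
      simp
      ring
    · intro j _ hj
      rw [h2 j hj, mul_zero]
  · intro i _ hi
    rw [h2 i hi, zero_mul]

theorem dual_eq_lf (L : StrongDual ℝ (V → ℝ)) : ∃ c, L = lf c := by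
  refine ⟨fun i => L (Pi.single i 1), ?_⟩
  ext ω
  rw [lf_apply]
  conv_lhs => rw [pi_eq_sum_univ' ω]
  rw [map_sum]
  apply Finset.sum_congr rfl
  intro i _
  rw [map_smul]
  simp [mul_comm]

theorem field_gaussian {μ : Measure (V → ℝ)} {K : V → V → ℝ} (hμ : IsGaussianField μ K) :
    IsGaussian μ := by
  apply isGaussian_of_map_eq_gaussianReal
  intro L
  obtain ⟨c, rfl⟩ := dual_eq_lf L
  exact ⟨_, _, field_map hμ c⟩

theorem field_var {μ : Measure (V → ℝ)} {K : V → V → ℝ} (hμ : IsGaussianField μ K)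
    (hpos : ∀ c : V → ℝ, 0 ≤ dotProduct c (Matrix.mulVec (Matrix.of K) c)) (c : V → ℝ) :
    Var[lf c; μ] = dotProduct c (Matrix.mulVec (Matrix.of K) c) := by
  have h := variance_map (μ := μ) (X := id) (Y := lf c) aemeasurable_id
    (lf c).continuous.measurable.aemeasurable
  rw [field_map hμ c] at h
  simp only [Function.id_comp] at h
  rw [← h, variance_id_gaussianReal, Real.coe_toNNReal _ (hpos c)]

theorem field_mean {μ : Measure (V → ℝ)} {K : V → V → ℝ} (hμ : IsGaussianField μ K)
    (c : V → ℝ) : ∫ ω, lf c ω ∂μ = 0 := by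
  have h := integral_map (μ := μ) (φ := lf c) (f := fun y : ℝ => y)
    (lf c).continuous.measurable.aemeasurable (by fun_prop)
  rw [field_map hμ c, integral_id_gaussianReal] at h
  exact h.symm

theorem lf_add (c c' : V → ℝ) : lf (c + c') = lf c + lf c' := by
  ext ω
  simp [lf_apply, add_mul, Finset.sum_add_distrib]

theorem field_cov {μ : Measure (V → ℝ)} {K : V → V → ℝ} (hμ : IsGaussianField μ K)
    (hpos : ∀ c : V → ℝ, 0 ≤ dotProduct c (Matrix.mulVec (Matrix.of K) c))
    (hsymm : (Matrix.of K).transpose = Matrix.of K)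
    (c c' : V → ℝ) :
    cov[lf c, lf c'; μ] = dotProduct c' (Matrix.mulVec (Matrix.of K) c) := by
  haveI := field_gaussian hμ
  have h := variance_add (μ := μ) (IsGaussian.memLp_dual μ (lf c) 2 (by simp))
    (IsGaussian.memLp_dual μ (lf c') 2 (by simp))
  have e : (⇑(lf c) + ⇑(lf c')) = ⇑(lf (c + c')) := by
    rw [lf_add]; rfl
  rw [e, field_var hμ hpos, field_var hμ hpos, field_var hμ hpos] at h
  have hs : dotProduct c (Matrix.mulVec (Matrix.of K) c') =
      dotProduct c' (Matrix.mulVec (Matrix.of K) c) := by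
    rw [Matrix.dotProduct_mulVec, ← Matrix.mulVec_transpose, hsymm, dotProduct_comm]
  rw [Matrix.mulVec_add, dotProduct_add, add_dotProduct, add_dotProduct, hs] at h
  linarith

theorem lf_single (x : V) : ⇑(lf (Pi.single x 1)) = fun ω : V → ℝ => ω x := by
  funext ω
  simp [lf_apply, Pi.single_apply]

/-- sigma-algebra generated by the field on `A` -/
noncomputable def sigA (A : Set V) : MeasurableSpace (V → ℝ) :=
  MeasurableSpace.comap (fun ω' : V → ℝ => A.restrict ω') inferInstance

theorem field_condExp {μ : Measure (V → ℝ)} {K : V → V → ℝ} (hμ : IsGaussianField μ K)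
    (hpos : ∀ c : V → ℝ, 0 ≤ dotProduct c (Matrix.mulVec (Matrix.of K) c))
    (hsymm : (Matrix.of K).transpose = Matrix.of K)
    (A : Set V) (x : V) (hx : x ∉ A) (κ : V → ℝ) (hκ : ∀ y, y ∉ A → κ y = 0)
    (hK : ∀ a ∈ A, Matrix.mulVec (Matrix.of K) κ a = K a x) :
    (condExp (sigA A) μ
      (fun ω => ω x) =ᵐ[μ] fun ω => ∑ y, κ y * ω y) ∧
    (condExp (sigA A) μ
      (fun ω => (ω x - condExp (sigA A) μ (fun ω' => ω' x) ω) ^ 2)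
      =ᵐ[μ] fun _ => K x x - Matrix.mulVec (Matrix.of K) κ x) := by
  haveI := field_gaussian hμ
  have hYm : Measurable (fun ω' : V → ℝ => A.restrict ω') := by
    apply measurable_pi_lambda
    intro a
    exact measurable_pi_apply _
  have hle : sigA A ≤ MeasurableSpace.pi := hYm.comap_le
  set v : V → ℝ := Pi.single x 1 - κ with hv
  have hKv : ∀ a, Matrix.mulVec (Matrix.of K) v a = K a x - Matrix.mulVec (Matrix.of K) κ a := by
    intro a
    rw [hv, Matrix.mulVec_sub, Pi.sub_apply, Matrix.mulVec_single_one]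
    rfl
  have hsplit : (fun ω : V → ℝ => ω x) = ⇑(lf κ) + ⇑(lf v) := by
    have : lf κ + lf v = lf (Pi.single x 1) := by rw [← lf_add, hv, add_sub_cancel]
    rw [← lf_single, ← this]; rfl
  -- independence
  have hlawX : HasGaussianLaw (fun ω : V → ℝ => ((fun _ : Unit => lf v ω), (fun a : A => ω a))) μ := by
    have := (IsGaussian.hasGaussianLaw_id (μ := μ)).map_fun
      ((ContinuousLinearMap.pi (fun _ : Unit => lf v)).prod
        (ContinuousLinearMap.pi (fun a : A => ContinuousLinearMap.proj (R := ℝ) (φ := fun _ : V => ℝ) a.1)))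
    exact this
  have hind0 := HasGaussianLaw.indepFun_of_covariance_eval
    (X := fun _ : Unit => (lf v : (V → ℝ) → ℝ)) (Y := fun (a : A) (ω : V → ℝ) => ω a) hlawX (by
      intro _ a
      rw [← lf_single a.1, field_cov hμ hpos hsymm, single_dotProduct, hKv, hK a.1 a.2]
      simp)
  have hind : IndepFun (lf v) (fun ω : V → ℝ => A.restrict ω) μ :=
    hind0.comp (φ := fun u : Unit → ℝ => u ()) (ψ := id) (measurable_pi_apply _) measurable_id
  have hInd : Indep (MeasurableSpace.comap (lf v) inferInstance) (sigA A) μ := hind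
  have hvm : Measurable (lf v) := (lf v).continuous.measurable
  have hint : Integrable (lf v) μ := IsGaussian.integrable_dual μ (lf v)
  have hintκ : Integrable (lf κ) μ := IsGaussian.integrable_dual μ (lf κ)
  have hc1 : condExp (sigA A) μ (lf v) =ᵐ[μ] fun _ => 0 := by
    have := condExp_indep_eq (m₁ := MeasurableSpace.comap (lf v) inferInstance) (m₂ := sigA A)
      (f := lf v) (μ := μ) hvm.comap_le hle
      (Measurable.stronglyMeasurable (comap_measurable (lf v))) hInd
    rwa [field_mean hμ] at this
  have hκm : StronglyMeasurable[sigA A] (lf κ) := by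
    apply Measurable.stronglyMeasurable
    have : (lf κ : (V → ℝ) → ℝ) = fun ω => ∑ a : A, κ a * A.restrict ω a := by
      funext ω
      rw [lf_apply]
      rw [← Finset.sum_subset (Finset.subset_univ A.toFinset)]
      · exact Finset.sum_subtype A.toFinset (by simp) (fun y => κ y * ω y)
      · intro y _ hy
        rw [hκ y (by simpa using hy), zero_mul]
    rw [this]
    have h2 : Measurable (fun u : A → ℝ => ∑ a : A, κ a * u a) := by fun_prop
    exact h2.comp (comap_measurable (fun ω' : V → ℝ => A.restrict ω'))
  have hc2 : condExp (sigA A) μ (lf κ) = lf κ := condExp_of_stronglyMeasurable hle hκm hintκ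
  have hA : condExp (sigA A) μ (fun ω => ω x) =ᵐ[μ] lf κ := by
    rw [hsplit]
    refine (condExp_add hintκ hint (sigA A)).trans ?_
    rw [hc2]
    filter_upwards [hc1] with ω h
    simp [h]
  refine ⟨?_, ?_⟩
  · filter_upwards [hA] with ω h
    rw [h, lf_apply]
  · have hB : (fun ω : V → ℝ => (ω x - condExp (sigA A) μ (fun ω' => ω' x) ω) ^ 2) =ᵐ[μ]
        fun ω => (lf v ω) ^ 2 := by
      filter_upwards [hA] with ω h
      rw [h]
      have := congrFun hsplit ω
      simp only [Pi.add_apply] at this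
      rw [this]; ring
    refine (condExp_congr_ae hB).trans ?_
    have := condExp_indep_eq (m₁ := MeasurableSpace.comap (lf v) inferInstance) (m₂ := sigA A)
      (f := fun ω => (lf v ω)^2) (μ := μ) hvm.comap_le hle
      (Measurable.stronglyMeasurable ((comap_measurable (lf v)).pow_const 2)) hInd
    refine this.trans ?_
    have hvar := field_var hμ hpos v
    rw [variance_of_integral_eq_zero hvm.aemeasurable (field_mean hμ v)] at hvar
    rw [hvar]
    have : dotProduct v (Matrix.mulVec (Matrix.of K) v) = K x x - Matrix.mulVec (Matrix.of K) κ x := by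
      conv_lhs => rw [hv, sub_dotProduct, ← hv, single_dotProduct, hKv, one_mul]
      have : dotProduct κ (Matrix.mulVec (Matrix.of K) v) = 0 := by
        unfold dotProduct
        apply Finset.sum_eq_zero
        intro a _
        by_cases ha : a ∈ A
        · rw [hKv, hK a ha]; simp
        · rw [hκ a ha, zero_mul]
      rw [this, sub_zero]
    rw [this]
end GFF

namespace GFF

theorem one_le_logN {N : ℕ} (hN : 4 ≤ N) : 1 ≤ Real.log (N:ℝ) := by
  have hN' : (4:ℝ) ≤ N := by exact_mod_cast hN
  rw [Real.le_log_iff_exp_le (by linarith)]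
  linarith [Real.exp_one_lt_d9]

theorem sn_upper {d N : ℕ} (hd : 3 ≤ d) (hN : 4 ≤ N) :
    (sn d N : ℝ) ≤ (1 + 8 / Real.log ((d:ℝ)-1)^2) * Real.log (N:ℝ) := by
  have hl := one_le_logN hN
  have hd' : (3:ℝ) ≤ d := by exact_mod_cast hd
  have hq : 0 < Real.log ((d:ℝ)-1) := Real.log_pos (by linarith)
  set q := Real.log ((d:ℝ)-1)
  set l := Real.log (N:ℝ)
  unfold sn
  rw [Nat.cast_max]
  apply max_le
  · have : 0 ≤ 8 / q^2 * l := by positivity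
    push_cast
    linarith
  · have hz : 0 ≤ 8 / q^2 * l := by positivity
    by_cases h0 : 0 ≤ 8 * Real.logb ((d:ℝ)-1) (Real.logb ((d:ℝ)-1) (N:ℝ))
    · refine (Nat.floor_le h0).trans ?_
      have h1 : Real.logb ((d:ℝ)-1) (N:ℝ) = l / q := rfl
      have h2 : Real.logb ((d:ℝ)-1) (l/q) = Real.log (l/q) / q := rfl
      rw [h1, h2]
      have h3 : Real.log (l/q) ≤ l / q := by
        have := Real.log_le_sub_one_of_pos (show 0 < l/q by positivity)
        linarith
      have h4 : Real.log (l/q) / q ≤ l / q / q := by gcongr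
      have h5 : l / q / q * 8 = 8 / q^2 * l := by field_simp
      linarith
    · rw [Nat.floor_of_nonpos (by linarith)]
      push_cast
      linarith

theorem sn_lower {d N : ℕ} (hd : 3 ≤ d) (hN : 4 ≤ N) :
    (((d:ℝ)-1)⁻¹)^(sn d N - 1) ≤ ((d:ℝ)-1)^2 * Real.log ((d:ℝ)-1)^8 / Real.log (N:ℝ)^8 := by
  have hl := one_le_logN hN
  have hd' : (3:ℝ) ≤ d := by exact_mod_cast hd
  have hq : 0 < Real.log ((d:ℝ)-1) := Real.log_pos (by linarith)
  have hs : 1 ≤ sn d N := le_max_left _ _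
  have h1 : (8:ℝ) * Real.logb ((d:ℝ)-1) (Real.logb ((d:ℝ)-1) (N:ℝ)) ≤ sn d N + 1 := by
    have h := (Nat.lt_floor_add_one
      ((8:ℝ) * Real.logb ((d:ℝ)-1) (Real.logb ((d:ℝ)-1) (N:ℝ)))).le
    have h2 : (⌊(8:ℝ) * Real.logb ((d:ℝ)-1) (Real.logb ((d:ℝ)-1) (N:ℝ))⌋₊ : ℝ) ≤ sn d N := by
      exact Nat.cast_le.2 (le_max_right 1 _)
    linarith
  set s := sn d N
  have hy : Real.logb ((d:ℝ)-1) (N:ℝ) = Real.log (N:ℝ) / Real.log ((d:ℝ)-1) := rfl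
  rw [hy] at h1
  set q := Real.log ((d:ℝ)-1)
  set l := Real.log (N:ℝ)
  have hy0 : 0 < l / q := by positivity
  have hD : (1:ℝ) < (d:ℝ) - 1 := by linarith
  set D := (d:ℝ) - 1
  have h3 : (l/q)^8 ≤ D^(s+1) := by
    have e1 : (l/q)^8 = D ^ ((8:ℝ) * Real.logb D (l/q)) := by
      rw [mul_comm, Real.rpow_mul (by linarith), Real.rpow_logb (by linarith) hD.ne' hy0]
      norm_cast
    rw [e1]
    have e2 : D^(s+1) = D ^ ((s:ℝ)+1) := by
      rw [← Real.rpow_natCast]; push_cast; rfl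
    rw [e2]
    exact Real.rpow_le_rpow_of_exponent_le hD.le h1
  have h4 : D^(s+1) = D^(s-1) * D^2 := by
    rw [← pow_add]; congr 1; omega
  rw [h4, div_pow] at h3
  rw [inv_pow, le_div_iff₀ (by positivity), inv_mul_le_iff₀ (by positivity)]
  rw [div_le_iff₀ (by positivity)] at h3
  linarith

theorem log_pow_le {N : ℕ} (hN : 4 ≤ N) (k : ℕ) : Real.log (N:ℝ)^k ≤ (k.factorial : ℝ) * N := by
  have hl := one_le_logN hN
  have h := Real.pow_div_factorial_le_exp (Real.log (N:ℝ)) (by linarith) k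
  have hN' : (0:ℝ) < N := by exact_mod_cast (by omega : 0 < N)
  rw [Real.exp_log hN', div_le_iff₀ (by positivity)] at h
  linarith

theorem num1 {d : ℕ} (hd : 3 ≤ d) (b β : ℝ) (hb : 0 < b) :
    ∃ C : ℝ, 0 < C ∧ ∀ N : ℕ, 4 ≤ N →
      (∀ a g : ℝ, 0 ≤ a → a ≤ b * Real.log (N:ℝ) → 0 ≤ g → g ≤ sn d N →
        a * (g / N)^2 ≤ (C / Real.log (N:ℝ)^4)^2) ∧
      (∀ e : ℝ, e ≤ 4 * (((d:ℝ)-1)⁻¹)^(sn d N - 1) →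
        (β⁻¹)^2 * e ≤ (C / Real.log (N:ℝ)^4)^2) := by
  set C1 := 1 + 8 / Real.log ((d:ℝ)-1)^2 with hC1
  have hC1p : 0 < C1 := by positivity
  set Z := (β⁻¹)^2 * (4 * (((d:ℝ)-1)^2 * Real.log ((d:ℝ)-1)^8)) with hZ
  have hZ0 : 0 ≤ Z := by positivity
  set W := b * C1^2 * 720^2 with hW
  have hW0 : 0 ≤ W := by positivity
  refine ⟨1 + W + Z, by positivity, fun N hN => ?_⟩
  have hl := one_le_logN hN
  have hN' : (0:ℝ) < N := by exact_mod_cast (by omega : 0 < N)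
  have hC2 : W ≤ (1+W+Z)^2 := by nlinarith
  have hC3 : Z ≤ (1+W+Z)^2 := by nlinarith
  have hu := sn_upper hd hN
  have hlow := sn_lower hd hN
  have h6 := log_pow_le hN 6
  set l := Real.log (N:ℝ) with hl_def
  have hll : (1 + W + Z)^2 / l^8 = ((1+W+Z) / l^4)^2 := by rw [div_pow]; ring
  rw [← hll]
  constructor
  · intro a g ha hab hg hgs
    have hg1 : g ≤ C1 * l := hgs.trans hu
    have e1 : a * (g/N)^2 ≤ (b*l) * (C1*l/N)^2 := by gcongr
    refine e1.trans ?_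
    rw [div_pow, mul_div_assoc', div_le_div_iff₀ (by positivity) (by positivity)]
    have hf : (Nat.factorial 6 : ℝ) = 720 := by norm_num [Nat.factorial]
    rw [hf] at h6
    have e2 : (l^6)^2 ≤ (720*N)^2 := by gcongr
    have e3 : l^11 ≤ l^12 := pow_le_pow_right₀ hl (by norm_num)
    calc b * l * (C1*l)^2 * l^8 = b * C1^2 * l^11 := by ring
      _ ≤ b * C1^2 * (720*N)^2 := by
          gcongr; calc l^11 ≤ l^12 := e3
            _ = (l^6)^2 := by ring
            _ ≤ _ := e2
      _ = W * (N:ℝ)^2 := by rw [hW]; ring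
      _ ≤ _ := by gcongr
  · intro e he
    calc (β⁻¹)^2 * e ≤ (β⁻¹)^2 * (4 * (((d:ℝ)-1)^2 * Real.log ((d:ℝ)-1)^8 / l^8)) := by
          gcongr; linarith
      _ = Z / l^8 := by rw [hZ]; ring
      _ ≤ _ := by gcongr

theorem num2 {N a : ℕ} (hN : 4 ≤ N) (b : ℝ) (hb : 0 < b) (haN : a < N)
    (hab : (a:ℝ) ≤ b * Real.log (N:ℝ)) :
    min (1/2) (Real.exp (-(4*b))) ≤ 1 - (a:ℝ)/N := by
  have hl := one_le_logN hN
  have hN' : (0:ℝ) < N := by exact_mod_cast (by omega : 0 < N)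
  have h2 := log_pow_le hN 2
  have hf : (Nat.factorial 2 : ℝ) = 2 := by norm_num [Nat.factorial]
  rw [hf] at h2
  by_cases h : 4 * b ≤ Real.log (N:ℝ)
  · refine (min_le_left _ _).trans ?_
    have : (a:ℝ)/N ≤ 1/2 := by
      rw [div_le_iff₀ hN']
      nlinarith
    linarith
  · refine (min_le_right _ _).trans ?_
    have h3 : (N:ℝ) ≤ Real.exp (4*b) := by
      rw [← Real.exp_log hN']
      exact Real.exp_le_exp.2 (by linarith)
    have h4 : (a:ℝ) + 1 ≤ N := by exact_mod_cast haN
    have h5 : 1 - (a:ℝ)/N = (N - a)/N := by field_simp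
    rw [h5, Real.exp_neg, inv_eq_one_div, div_le_div_iff₀ (by positivity) hN']
    nlinarith [Real.exp_pos (4*b)]

variable {V : Type} [Fintype V]

theorem card_ge {G : SimpleGraph V} {d : ℕ} (hreg : IsReg G d) (x : V) : d + 1 ≤ Fintype.card V := by
  have h := hreg x
  rw [Nat.card_eq_fintype_card, ← Set.toFinset_card] at h
  rw [← h]
  have : x ∉ (G.neighborSet x).toFinset := by simp
  rw [← Finset.card_insert_of_notMem this]
  exact Finset.card_le_univ _

theorem quad_nonneg {G : SimpleGraph V} {d : ℕ} {β : ℝ} {K : Matrix V V ℝ} [Nonempty V]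
    (hd : 3 ≤ d) (hreg : IsReg G d) (hK : GreenProps G d β K) (c : V → ℝ) :
    0 ≤ dotProduct c (Matrix.mulVec K c) := by
  have h := green_lower hd hreg hK c
  have h2 : (∑ y, c y)^2 / (Fintype.card V : ℝ) ≤ ∑ y, c y^2 := by
    rw [div_le_iff₀ (by exact_mod_cast Fintype.card_pos)]
    have := sq_sum_le_card_mul_sum_sq (s := Finset.univ) (f := c)
    rw [Finset.card_univ] at this
    linarith
  unfold dotProduct
  linarith

theorem mean_bound (A : Finset V) (η ω : V → ℝ) (hη : ∀ y, y ∉ A → η y = 0) (E M : ℝ)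
    (hE : 0 ≤ E) (hM : 0 ≤ M)
    (h1 : ∑ y, η y^2 ≤ E^2) (h2 : ∑ y ∈ A, ω y^2 ≤ M^2) : |∑ y, η y * ω y| ≤ E * M := by
  have e1 : ∑ y, η y * ω y = ∑ y ∈ A, η y * ω y := by
    symm
    apply Finset.sum_subset (Finset.subset_univ _)
    intro y _ hy
    rw [hη y hy, zero_mul]
  have e2 : ∑ y ∈ A, η y^2 ≤ E^2 := le_trans
    (Finset.sum_le_sum_of_subset_of_nonneg (Finset.subset_univ _) (fun _ _ _ => sq_nonneg _)) h1
  rw [e1]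
  refine abs_le_of_sq_le_sq ?_ (mul_nonneg hE hM)
  have := Finset.sum_mul_sq_le_sq_mul_sq A η ω
  calc _ ≤ _ := this
    _ ≤ E^2 * M^2 := by
      apply mul_le_mul e2 h2 (Finset.sum_nonneg fun _ _ => sq_nonneg _) (by positivity)
    _ = _ := by ring

theorem single_bound {d : ℕ} (hd : 3 ≤ d) (G : SimpleGraph V) (hc : G.Connected)
    (hreg : IsReg G d) (β : ℝ) (hβ : 0 < β) (hgap : SpectralGapLB G d β)
    (μ : Measure (V → ℝ)) (hμ : IsGaussianField μ (zGreen G d (Fintype.card V)))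
    (b b' C : ℝ) (hb : 0 < b) (hb' : 0 < b') (hC : 0 < C)
    (hnum : (∀ a g : ℝ, 0 ≤ a → a ≤ b * Real.log (Fintype.card V:ℝ) → 0 ≤ g →
        g ≤ sn d (Fintype.card V) →
        a * (g / (Fintype.card V : ℝ))^2 ≤ (C / Real.log (Fintype.card V:ℝ)^4)^2) ∧
      (∀ e : ℝ, e ≤ 4 * (((d:ℝ)-1)⁻¹)^(sn d (Fintype.card V) - 1) →
        (β⁻¹)^2 * e ≤ (C / Real.log (Fintype.card V:ℝ)^4)^2))
    (A : Set V) (x xbar : V) (hA : (A.ncard : ℝ) ≤ b * Real.log (Fintype.card V : ℝ))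
    (hgood : GoodVertex G A (sn d (Fintype.card V)) x) (hxb : xbar ∈ A) (hadj : G.Adj x xbar)
    (c1 : ℝ) (hc1 : c1 = min (1/2) (Real.exp (-(4*b)))) :
    ∀ᵐ ω ∂ μ,
      (∀ z ∈ A, |ω z| ≤ b' * Real.sqrt (Real.log (Fintype.card V : ℝ))) →
        (|condExp (sigA A) μ (fun ω' => ω' x) ω - ((d : ℝ) - 1)⁻¹ * ω xbar|
          ≤ (8*C*(b+1)*b'/c1 + 8*C + 32*C^2/c1) / Real.log (Fintype.card V : ℝ) ^ 2) ∧
        (|condExp (sigA A) μ (fun ω' => (ω' x - condExp (sigA A) μ (fun ω'' => ω'' x) ω') ^ 2) ω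
            - (d : ℝ) / ((d : ℝ) - 1)|
          ≤ (8*C*(b+1)*b'/c1 + 8*C + 32*C^2/c1) / Real.log (Fintype.card V : ℝ) ^ 3) := by
  haveI : Nonempty V := ⟨x⟩
  have hN : 4 ≤ Fintype.card V := by have := card_ge hreg x; omega
  have hl := one_le_logN hN
  have hc1p : 0 < c1 := by rw [hc1]; exact lt_min (by norm_num) (Real.exp_pos _)
  have hK := green_props G d hd hreg hc β hβ hgap
  have hs : 1 ≤ sn d (Fintype.card V) := le_max_left _ _
  obtain ⟨S, lv, par, hTS⟩ := tree_struct G hc A _ hs x xbar hgood hxb hadj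
  obtain ⟨g, e, hLg, hgA, hgx, hg0, hgs, he⟩ := test_fun hd hreg hs hTS
  have hxA : x ∉ A := hgood.1
  have hncard : A.ncard = A.toFinset.card := Set.ncard_eq_toFinset_card' A
  rw [hncard] at hA
  have haN : A.toFinset.card < Fintype.card V := by
    rw [Finset.card_lt_iff_ne_univ]
    intro h
    apply hxA
    have : x ∈ A.toFinset := by rw [h]; exact Finset.mem_univ _
    simpa using this
  have hc1' := num2 hN b hb haN hA
  rw [← hc1] at hc1'
  set l := Real.log (Fintype.card V : ℝ) with hl_def
  have hδ : 0 ≤ C / l^4 := by positivity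
  obtain ⟨κ, hκ0, hκK, hκe, hκv⟩ := krig_est hd hreg hK A.toFinset c1 hc1p hc1' x xbar
    (by simpa using hxb) g e hLg (fun a ha => hgA a (by simpa using ha)) hgx (C / l^4) hδ
    (hnum.1 _ _ (by positivity) hA hg0 hgs) (hnum.2 _ he)
  have hsymm : (Matrix.of (zGreen G d (Fintype.card V))).transpose =
      Matrix.of (zGreen G d (Fintype.card V)) := by
    ext i j
    first
      | exact hK.symm j i
      | exact hK.symm i j
      | exact congrFun (congrFun hK.symm i) j
  obtain ⟨hm, hv⟩ := field_condExp hμ (quad_nonneg hd hreg hK) hsymm A x hxA κ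
    (fun y hy => hκ0 y (by simpa using hy)) (fun a ha => hκK a (by simpa using ha))
  filter_upwards [hm, hv] with ω hmω hvω hω
  rw [hmω, hvω]
  have hX0 : 0 ≤ 8*C*(b+1)*b'/c1 := by positivity
  have hY0 : 0 ≤ 32*C^2/c1 := by positivity
  constructor
  · have hsum : ∑ y, κ y * ω y - ((d:ℝ)-1)⁻¹ * ω xbar =
        ∑ y, (κ y - ((d:ℝ)-1)⁻¹ * (if y = xbar then 1 else 0)) * ω y := by
      simp [sub_mul, Finset.sum_sub_distrib]
    rw [hsum]
    have hω2 : ∑ y ∈ A.toFinset, ω y^2 ≤ ((b+1)*b'*l)^2 := by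
      calc ∑ y ∈ A.toFinset, ω y^2 ≤ ∑ y ∈ A.toFinset, b'^2 * l := by
            apply Finset.sum_le_sum
            intro y hy
            have h := hω y (by simpa using hy)
            have h2 : ω y^2 ≤ (b' * Real.sqrt l)^2 := by
              rw [← sq_abs]; gcongr
            rwa [mul_pow, Real.sq_sqrt (by linarith)] at h2
        _ = A.toFinset.card * (b'^2 * l) := by simp
        _ ≤ (b * l) * (b'^2 * l) := by gcongr
        _ ≤ _ := by
            have : b ≤ (b+1)^2 := by nlinarith
            have h3 : 0 ≤ (b' * l)^2 := sq_nonneg _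
            nlinarith
    have hb2 := mean_bound A.toFinset _ ω (fun y hy => by
      have hy' : y ∉ A := by simpa using hy
      have hne : y ≠ xbar := fun h => hy' (h ▸ hxb)
      rw [hκ0 y hy, if_neg hne]; simp) (8 * (C/l^4)/c1) ((b+1)*b'*l)
      (by positivity) (by positivity) hκe hω2
    refine hb2.trans ?_
    have e1 : 8 * (C/l^4)/c1 * ((b+1)*b'*l) = (8*C*(b+1)*b'/c1) / l^3 := by
      field_simp
    rw [e1]
    have e2 : l^2 ≤ l^3 := pow_le_pow_right₀ hl (by norm_num)
    gcongr
    linarith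
  · refine hκv.trans ?_
    have e2 : l^3 ≤ l^4 := pow_le_pow_right₀ hl (by norm_num)
    have e3 : l^3 ≤ l^8 := pow_le_pow_right₀ hl (by norm_num)
    have e4 : 8 * (C/l^4) + 32 * (C/l^4)^2/c1 = 8*C/l^4 + (32*C^2/c1)/l^8 := by
      field_simp
    rw [e4]
    have e5 : 8*C/l^4 ≤ 8*C/l^3 := by gcongr
    have e6 : (32*C^2/c1)/l^8 ≤ (32*C^2/c1)/l^3 := by gcongr
    rw [add_div, add_div]
    have : 0 ≤ 8*C*(b+1)*b'/c1 / l^3 := by positivity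
    linarith
end GFF

/-- near the boundary of `A`, at a good vertex, the conditional law of the
zero-average GFF is close to that of the tree GFF. -/
theorem good_vertex_conditional_law
    (d : ℕ) (hd : 3 ≤ d)
    (V : ℕ → Type) [∀ n, Fintype (V n)]
    (G : ∀ n, SimpleGraph (V n)) (N : ℕ → ℕ) (α β : ℝ)
    (hα : 0 < α ∧ α ≤ 1) (hβ : 0 < β ∧ β ≤ 2)
    (hNmono : StrictMono N) (hNpos : ∀ n, 1 ≤ N n)
    (hcard : ∀ n, Nat.card (V n) = N n)
    (hconn : ∀ n, (G n).Connected)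
    (hreg : ∀ n, GFF.IsReg (G n) d)
    (hcyc : ∀ n (x : V n),
      GFF.adjPairs (G n) (GFF.gball (G n) x ⌊α * Real.logb ((d : ℝ) - 1) (N n : ℝ)⌋₊) ≤
        2 * (GFF.gball (G n) x ⌊α * Real.logb ((d : ℝ) - 1) (N n : ℝ)⌋₊).ncard)
    (hgap : ∀ n, GFF.SpectralGapLB (G n) d β)
    (μ : ∀ n, Measure (V n → ℝ))
    (hμ : ∀ n, GFF.IsGaussianField (μ n) (GFF.zGreen (G n) d (N n)))
    (b b' : ℝ) (hb : 0 < b) (hb' : 0 < b') :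
    ∃ c : ℝ, 0 < c ∧
      ∀ (n : ℕ) (A : Set (V n)) (x xbar : V n),
        A.Nonempty → (A.ncard : ℝ) ≤ b * Real.log (N n) →
        GFF.GoodVertex (G n) A (GFF.sn d (N n)) x →
        xbar ∈ A → (G n).Adj x xbar →
        ∀ᵐ ω ∂ μ n,
          (∀ z ∈ A, |ω z| ≤ b' * Real.sqrt (Real.log (N n))) →
            (|condExp
                  (MeasurableSpace.comap (fun ω' : V n → ℝ => A.restrict ω') inferInstance)
                  (μ n) (fun ω' => ω' x) ω
                - ((d : ℝ) - 1)⁻¹ * ω xbar| ≤ c / Real.log (N n) ^ 2) ∧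
            (|condExp
                  (MeasurableSpace.comap (fun ω' : V n → ℝ => A.restrict ω') inferInstance)
                  (μ n)
                  (fun ω' => (ω' x -
                    condExp
                      (MeasurableSpace.comap
                        (fun ω'' : V n → ℝ => A.restrict ω'') inferInstance)
                      (μ n) (fun ω'' => ω'' x) ω') ^ 2) ω
                - (d : ℝ) / ((d : ℝ) - 1)| ≤ c / Real.log (N n) ^ 3) := by
  obtain ⟨C, hC, hnum⟩ := GFF.num1 hd b β hb
  have hc1 : 0 < min (1/2) (Real.exp (-(4*b))) := lt_min (by norm_num) (Real.exp_pos _)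
  refine ⟨8*C*(b+1)*b'/(min (1/2) (Real.exp (-(4*b)))) + 8*C +
    32*C^2/(min (1/2) (Real.exp (-(4*b)))), by positivity, ?_⟩
  intro n A x xbar _ hA hgood hxb hadj
  have hNn : N n = Fintype.card (V n) := by rw [← hcard n, Nat.card_eq_fintype_card]
  have hμn := hμ n
  rw [hNn] at hA hgood hμn ⊢
  have hN : 4 ≤ Fintype.card (V n) := by
    have := GFF.card_ge (hreg n) x
    omega
  exact GFF.single_bound hd (G n) (hconn n) (hreg n) β hβ.1 (hgap n) (μ n) hμn b b' C hb hb' hC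
    (hnum _ hN) A x xbar hA hgood hxb hadj _ rfl
end

section
/- There exists a constant c > 0, depending only on d, α, β, such that for all n ≥ 1, every non-empty A ⊊ G_n and every good vertex x ∈ G_A at the boundary of A, the discrete-time simple random walk started at x satisfies 1/(d−1) − c·(ln(N_n))^{−7} ≤ P_x^{G_n}[ H_A = T_{F_A(x,s_n)} ] ≤ 1/(d−1), and E_x^{G_n}[ T_{F_A(x,s_n)} ] ≤ c·ln(N_n). -/
open MeasureTheory ProbabilityTheory Filter Set
open scoped ENNReal NNReal ENat Classical

namespace GFF

noncomputable def lvl {V : Type*} (G : SimpleGraph V) (A : Set V) (z : V) : ℕ :=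
  sInf ((fun a => G.dist a z) '' A)

section graph
variable {V : Type*} {G : SimpleGraph V} {A : Set V}

lemma lvl_le {a : V} (ha : a ∈ A) (z : V) : lvl G A z ≤ G.dist a z :=
  Nat.sInf_le ⟨a, ha, rfl⟩

lemma lvl_ex (hA : A.Nonempty) (z : V) : ∃ a ∈ A, G.dist a z = lvl G A z :=
  Nat.sInf_mem (hA.image (fun a => G.dist a z))

lemma lvl_zero (hG : G.Connected) (hA : A.Nonempty) (z : V) : lvl G A z = 0 ↔ z ∈ A := by
  constructor
  · intro h
    obtain ⟨a, ha, h2⟩ := lvl_ex (G := G) hA z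
    rw [h] at h2
    rw [(hG a z).dist_eq_zero_iff] at h2
    exact h2 ▸ ha
  · intro h
    have := lvl_le (G := G) h z
    simpa using this

lemma lvl_adj (hG : G.Connected) (hA : A.Nonempty) {z w : V} (h : G.Adj z w) :
    lvl G A w ≤ lvl G A z + 1 := by
  obtain ⟨a, ha, h2⟩ := lvl_ex (G := G) hA z
  have h3 := hG.dist_triangle (u := a) (v := z) (w := w)
  have h4 := lvl_le (G := G) ha w
  have h5 : G.dist z w = 1 := SimpleGraph.dist_eq_one_iff_adj.2 h
  omega

lemma lvl_pred (hG : G.Connected) (hA : A.Nonempty) {z : V} (h : 1 ≤ lvl G A z) :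
    ∃ w, G.Adj z w ∧ lvl G A w + 1 = lvl G A z := by
  obtain ⟨a, ha, h2⟩ := lvl_ex (G := G) hA z
  obtain ⟨p, hp⟩ := hG.exists_walk_length_eq_dist z a
  rw [SimpleGraph.dist_comm, h2] at hp
  cases p with
  | nil => simp at hp; omega
  | @cons _ w _ hadj q =>
    refine ⟨w, hadj, ?_⟩
    have h3 := SimpleGraph.dist_le q
    have h4 := lvl_le (G := G) ha w
    have h5 := lvl_adj hG hA hadj.symm
    rw [SimpleGraph.dist_comm] at h4
    simp at hp
    omega

lemma mem_sball (hA : A.Nonempty) (s : ℕ) (z : V) : z ∈ sball G A s ↔ lvl G A z ≤ s := by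
  constructor
  · rintro ⟨a, ha, h⟩
    exact (lvl_le ha z).trans h
  · intro h
    obtain ⟨a, ha, h2⟩ := lvl_ex (G := G) hA z
    exact ⟨a, ha, by omega⟩

lemma F_lvl (hG : G.Connected) (hA : A.Nonempty) {s : ℕ} {x z : V} (hz : z ∈ Fset G A s x) :
    1 ≤ lvl G A z ∧ lvl G A z ≤ s := by
  obtain ⟨p, hp⟩ := hz
  obtain ⟨h1, h2⟩ := hp z p.end_mem_support
  rw [mem_sball hA] at h1
  rw [← lvl_zero hG hA] at h2
  omega

lemma F_ext (hG : G.Connected) (hA : A.Nonempty) {s : ℕ} {x z w : V} (hz : z ∈ Fset G A s x)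
    (h : G.Adj z w) (h1 : 1 ≤ lvl G A w) (h2 : lvl G A w ≤ s) : w ∈ Fset G A s x := by
  obtain ⟨p, hp⟩ := hz
  refine ⟨p.concat h, ?_⟩
  intro v hv
  rw [SimpleGraph.Walk.support_concat] at hv
  simp at hv
  rcases hv with hv | rfl
  · exact hp v hv
  · rw [mem_sball hA, ← lvl_zero hG hA]
    omega

lemma good_mem (hG : G.Connected) (hA : A.Nonempty) {s : ℕ} (hs : 1 ≤ s) {x : V}
    (hx : GoodVertex G A s x) : x ∈ Fset G A s x ∧ lvl G A x = 1 := by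
  obtain ⟨hxA, ⟨y, ⟨hy, hxy⟩, -⟩, -⟩ := hx
  have h1 : lvl G A x ≤ 0 + 1 := by
    rw [← (lvl_zero hG hA y).2 hy]; exact lvl_adj hG hA hxy.symm
  have h2 : lvl G A x ≠ 0 := fun h => hxA ((lvl_zero hG hA x).1 h)
  refine ⟨⟨SimpleGraph.Walk.nil, ?_⟩, by omega⟩
  intro v hv
  simp at hv
  subst hv
  rw [mem_sball hA]
  exact ⟨by omega, hxA⟩

lemma good_one (hG : G.Connected) (hA : A.Nonempty) {s : ℕ} {x z : V}
    (hx : GoodVertex G A s x) (hz : z ∈ Fset G A s x) (h : lvl G A z = 1) : z = x := by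
  by_contra hne
  obtain ⟨p, hp⟩ := hz
  obtain ⟨w, hw, hw2⟩ := lvl_pred hG hA (z := z) (by omega)
  have hwA : w ∈ A := (lvl_zero hG hA w).1 (by omega)
  obtain ⟨v, hv, hv2⟩ := hx.2.2.2 z (hp z p.end_mem_support).2 ⟨w, hwA, hw⟩ hne p.reverse
    (fun v hv => (hp v (by simpa using hv)).2)
  exact hv2 (hp v (by simpa using hv)).1

lemma good_struct [Fintype V] (hG : G.Connected) (hA : A.Nonempty) {s : ℕ} (hs : 1 ≤ s) {x : V}
    (hx : GoodVertex G A s x) {z : V} (hz : z ∈ Fset G A s x) :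
    ∃ y, G.Adj z y ∧ lvl G A y + 1 = lvl G A z ∧
      ∀ w, G.Adj z w → w ≠ y → lvl G A w = lvl G A z + 1 := by
  set F := Fset G A s x with hF
  obtain ⟨hxF, hx1⟩ := good_mem hG hA hs hx
  have hpar : ∀ z : V, ∃ y, 1 ≤ lvl G A z → G.Adj z y ∧ lvl G A y + 1 = lvl G A z := by
    intro z
    by_cases h : 1 ≤ lvl G A z
    · obtain ⟨y, hy⟩ := lvl_pred hG hA h
      exact ⟨y, fun _ => hy⟩
    · exact ⟨z, fun h' => absurd h' h⟩
  choose par hpar using hpar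
  have hparF : ∀ z ∈ F, z ≠ x → par z ∈ F := by
    intro z hz hne
    have h1 := F_lvl hG hA hz
    have h2 := hpar z h1.1
    have h3 : lvl G A z ≠ 1 := fun h => hne (good_one hG hA hx hz h)
    exact F_ext hG hA hz h2.1 (by omega) (by omega)
  -- the edge set
  have hedge : ∀ u ∈ F, ∀ v ∈ F, G.Adj u v → (u ≠ x ∧ v = par u) ∨ (v ≠ x ∧ u = par v) := by
    set E : Set (V × V) := {p : V × V | p.1 ∈ F ∧ p.2 ∈ F ∧ G.Adj p.1 p.2} with hE
    set E1 : Set (V × V) := (fun z => (z, par z)) '' (F \ {x}) with hE1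
    set E2 : Set (V × V) := (fun z => (par z, z)) '' (F \ {x}) with hE2
    have hc : (F \ {x}).ncard = F.ncard - 1 := by
      rw [Set.ncard_sdiff_singleton_of_mem hxF]
    have c1 : E1.ncard = F.ncard - 1 := by
      rw [hE1, Set.ncard_image_of_injective _ (fun a b h => by simpa using (Prod.ext_iff.1 h).1), hc]
    have c2 : E2.ncard = F.ncard - 1 := by
      rw [hE2, Set.ncard_image_of_injective _ (fun a b h => by simpa using (Prod.ext_iff.1 h).2), hc]
    have hdis : Disjoint E1 E2 := by
      rw [Set.disjoint_left]
      rintro _ ⟨a, ⟨ha, _⟩, rfl⟩ ⟨b, ⟨hb, _⟩, hab⟩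
      have e1 := (Prod.ext_iff.1 hab).1
      have e2 := (Prod.ext_iff.1 hab).2
      simp only at e1 e2
      have h1 := (hpar a (F_lvl hG hA ha).1).2
      have h2 := (hpar b (F_lvl hG hA hb).1).2
      rw [e1] at h2
      rw [← e2] at h1
      omega
    have hsub : E1 ∪ E2 ⊆ E := by
      rintro _ (⟨a, ⟨ha, hax⟩, rfl⟩ | ⟨a, ⟨ha, hax⟩, rfl⟩)
      · exact ⟨ha, hparF a ha hax, (hpar a (F_lvl hG hA ha).1).1⟩
      · exact ⟨hparF a ha hax, ha, (hpar a (F_lvl hG hA ha).1).1.symm⟩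
    have hEc : E.ncard = 2 * (F.ncard - 1) := hx.2.2.1
    have heq : E1 ∪ E2 = E := by
      apply Set.eq_of_subset_of_ncard_le hsub
      · rw [Set.ncard_union_eq hdis, c1, c2, hEc]; omega
    intro u hu v hv huv
    have : (u, v) ∈ E1 ∪ E2 := by rw [heq]; exact ⟨hu, hv, huv⟩
    rcases this with ⟨a, ⟨_, hax⟩, hab⟩ | ⟨a, ⟨_, hax⟩, hab⟩
    · simp only [Prod.mk.injEq] at hab
      obtain ⟨rfl, rfl⟩ := hab
      exact Or.inl ⟨hax, rfl⟩
    · simp only [Prod.mk.injEq] at hab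
      obtain ⟨rfl, rfl⟩ := hab
      exact Or.inr ⟨hax, rfl⟩
  have hz1 := F_lvl hG hA hz
  refine ⟨par z, (hpar z hz1.1).1, (hpar z hz1.1).2, ?_⟩
  intro w hw hne
  have a1 := lvl_adj hG hA hw
  have a2 := lvl_adj hG hA hw.symm
  have hp := hpar z hz1.1
  by_contra hcon
  by_cases h0 : lvl G A w = 0
  · have hzx : z = x := good_one hG hA hx hz (by omega)
    subst hzx
    obtain ⟨y, hy, hu⟩ := hx.2.1
    have e1 := hu w ⟨(lvl_zero hG hA w).1 h0, hw⟩
    have e2 := hu (par z) ⟨(lvl_zero hG hA _).1 (by omega), hp.1⟩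
    exact hne (e1.trans e2.symm)
  · have hwF : w ∈ F := F_ext hG hA hz hw (by omega) (by omega)
    rcases hedge z hz w hwF hw with ⟨_, h⟩ | ⟨_, h⟩
    · exact hne h
    · have := (hpar w (by omega)).2
      rw [← h] at this
      omega

end graph
end GFF
namespace GFF
section prob

noncomputable def pr {V : Type*} (G : SimpleGraph V) (d : ℕ) (u v : V) : ℝ :=
  if G.Adj u v then ((d : ℝ))⁻¹ else 0

lemma pr_nonneg {V : Type*} (G : SimpleGraph V) (d : ℕ) (u v : V) : 0 ≤ pr G d u v := by
  unfold pr; split_ifs <;> positivity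

lemma pr_avg {V : Type*} [Fintype V] {G : SimpleGraph V} {d : ℕ} (hd : 3 ≤ d) (hreg : IsReg G d)
    {z y : V} (hy : G.Adj z y) (φ : V → ℝ) (b : ℝ) (h : ∀ w, G.Adj z w → w ≠ y → φ w = b) :
    ∑ w, pr G d z w * φ w = (d : ℝ)⁻¹ * φ y + (d : ℝ)⁻¹ * ((d : ℝ) - 1) * b := by
  have h1 : ∑ w, pr G d z w * φ w = ∑ w, (pr G d z w * b + if w = y then (d : ℝ)⁻¹ * (φ y - b) else 0) := by
    apply Finset.sum_congr rfl
    intro w _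
    by_cases hw : w = y
    · subst hw; simp [pr, hy]; ring
    · simp only [hw, if_false, add_zero]
      by_cases ha : G.Adj z w
      · rw [h w ha hw]
      · simp [pr, ha]
  have h2 : ∑ w, pr G d z w = 1 := by
    have := hreg z
    rw [Nat.card_eq_fintype_card, SimpleGraph.card_neighborSet_eq_degree] at this
    unfold pr
    rw [← Finset.sum_filter, Finset.sum_const, ← SimpleGraph.neighborFinset_eq_filter,
      SimpleGraph.card_neighborFinset_eq_degree, this, nsmul_eq_mul]
    have : (d : ℝ) ≠ 0 := by positivity
    field_simp
  rw [h1, Finset.sum_add_distrib, ← Finset.sum_mul, h2, Finset.sum_ite_eq' Finset.univ y]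
  have : (d : ℝ) ≠ 0 := by positivity
  simp
  field_simp
  ring

lemma srw_singleton {V : Type*} [Fintype V] [MeasurableSpace V] {G : SimpleGraph V} {d : ℕ}
    {W : V → Measure (ℕ → V)} (hW : IsSRW G d W) : MeasurableSingletonClass V := by
  have hsep : MeasurableSpace.SeparatesPoints V := by
    constructor
    intro u v huv
    by_contra hne
    have hu : W u {ω | ω 0 = u} = 1 := by
      have := hW.2 u 0 (fun _ => u)
      simpa using this
    have hv : W u {ω | ω 0 = v} = 0 := by
      have := hW.2 u 0 (fun _ => v)
      simpa [Ne.symm hne] using this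
    set E := toMeasurable (W u) {ω | ω 0 = v} with hE
    have hE0 : W u E = 0 := by rw [hE, measure_toMeasurable, hv]
    have hnot : ¬ ({ω : ℕ → V | ω 0 = u} ⊆ E) := by
      intro hs
      have := measure_mono (μ := W u) hs
      rw [hu, hE0] at this
      simp at this
    obtain ⟨ω, hω, hωE⟩ := Set.not_subset.1 hnot
    have hm : Measurable (fun a : V => Function.update ω 0 a) := measurable_update ω
    have hms : MeasurableSet ((fun a : V => Function.update ω 0 a) ⁻¹' Eᶜ) :=
      hm (measurableSet_toMeasurable _ _).compl
    have := huv _ hms (by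
      have : Function.update ω 0 u = ω := by
        rw [← (hω : ω 0 = u)]; simp
      simpa [this] using hωE)
    apply this
    apply subset_toMeasurable
    simp
  infer_instance

variable {V : Type*} [Fintype V] [MeasurableSpace V] [MeasurableSingletonClass V]

def Dk (F : Set V) (k : ℕ) : Set (ℕ → V) := {ω | ∀ i ≤ k, ω i ∈ F}

lemma meas_coord (S : Set V) (k : ℕ) : MeasurableSet {ω : ℕ → V | ω k ∈ S} :=
  measurable_pi_apply k (Set.toFinite S).measurableSet

lemma meas_Dk (F : Set V) (k : ℕ) : MeasurableSet (Dk F k) := by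
  have : Dk F k = ⋂ i, ⋂ (_ : i ≤ k), {ω : ℕ → V | ω i ∈ F} := by
    ext; simp [Dk]
  rw [this]
  exact MeasurableSet.iInter fun i => MeasurableSet.iInter fun _ => meas_coord F i

lemma markov {μ : Measure (ℕ → V)} [IsProbabilityMeasure μ] {P : V → V → ℝ} {x : V}
    (h : ∀ (k : ℕ) (p : ℕ → V), μ.real {ω | ∀ i ≤ k, ω i = p i} =
      (if p 0 = x then 1 else 0) * ∏ i ∈ Finset.range k, P (p i) (p (i + 1)))
    (F : Set V) (k : ℕ) (z w : V) :
    μ.real (Dk F k ∩ {ω | ω k = z} ∩ {ω | ω (k + 1) = w}) =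
      μ.real (Dk F k ∩ {ω | ω k = z}) * P z w := by
  set f : (ℕ → V) → (Fin (k + 1) → V) := fun ω i => ω i with hf
  have hfm : Measurable f := measurable_pi_lambda _ fun i => measurable_pi_apply _
  set S : Finset (Fin (k + 1) → V) :=
    Finset.univ.filter fun p => (∀ i, p i ∈ F) ∧ p (Fin.last k) = z with hS
  have hpre : Dk F k ∩ {ω | ω k = z} = f ⁻¹' (S : Set _) := by
    ext ω
    simp only [hS, Dk, hf, Set.mem_inter_iff, Set.mem_ofPred_eq, Set.mem_preimage,
      Finset.coe_filter, Finset.mem_univ, true_and, Fin.val_last]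
    refine and_congr_left fun _ => ⟨fun h i => h i (by omega), fun h i hi => h ⟨i, by omega⟩⟩
  set B : Set (ℕ → V) := {ω | ω (k + 1) = w} with hB
  have hBm : MeasurableSet B := meas_coord {w} (k + 1)
  have hpm : ∀ p, MeasurableSet (f ⁻¹' {p}) := fun p => hfm (measurableSet_singleton p)
  have e1 := sum_measureReal_preimage_singleton (μ := μ) S (f := f) (fun p _ => hpm p)
  have e2 := sum_measureReal_preimage_singleton (μ := μ.restrict B) S (f := f) (fun p _ => hpm p)
  rw [hpre, ← e1, ← measureReal_restrict_apply (hfm S.measurableSet), ← e2, Finset.sum_mul]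
  apply Finset.sum_congr rfl
  intro p hp
  rw [measureReal_restrict_apply (hpm p)]
  let q : ℕ → V := fun i => if hi : i < k + 1 then p ⟨i, hi⟩ else w
  have q1 : f ⁻¹' {p} = {ω | ∀ i ≤ k, ω i = q i} := by
    ext ω
    simp only [hf, Set.mem_preimage, Set.mem_singleton_iff, Set.mem_ofPred_eq, funext_iff]
    constructor
    · intro h i hi
      have := h ⟨i, by omega⟩
      simp only [q, dif_pos (show i < k + 1 by omega)]
      exact this
    · intro h i
      rw [h i (by omega)]
      simp only [q, dif_pos i.2]
  have qk1 : q (k + 1) = w := by simp [q]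
  have qk : q k = z := by
    have : p (Fin.last k) = z := by simpa [hS] using (Finset.mem_filter.1 hp).2.2
    simp only [q, show k < k + 1 by omega, dif_pos]
    exact this
  have q2 : f ⁻¹' {p} ∩ B = {ω | ∀ i ≤ k + 1, ω i = q i} := by
    rw [q1]
    ext ω
    simp only [hB, Set.mem_inter_iff, Set.mem_ofPred_eq]
    constructor
    · rintro ⟨h1, h2⟩ i hi
      rcases Nat.le_succ_iff.1 hi with hi | rfl
      · exact h1 i hi
      · rw [h2, qk1]
    · intro h
      exact ⟨fun i hi => h i (by omega), by rw [h (k + 1) le_rfl, qk1]⟩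
  rw [q2, q1, h, h, Finset.prod_range_succ, qk, qk1]
  ring

/-- sum over values -/
lemma sum_vals {μ : Measure (ℕ → V)} [IsProbabilityMeasure μ] (D : Set (ℕ → V)) 
    (k : ℕ) (S : Set V) :
    μ.real (D ∩ {ω | ω k ∈ S}) = ∑ w, if w ∈ S then μ.real (D ∩ {ω | ω k = w}) else 0 := by
  have e2 := sum_measureReal_preimage_singleton (μ := μ.restrict D) (Finset.univ.filter (· ∈ S))
    (f := fun ω : ℕ → V => ω k) (fun p _ => meas_coord {p} k)
  rw [← Finset.sum_filter]
  rw [measureReal_restrict_apply (measurable_pi_apply k (Finset.measurableSet _))] at e2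
  rw [Set.inter_comm]
  convert e2.symm using 2
  · ext; simp
  · rename_i w _
    have hm : MeasurableSet ((fun ω : ℕ → V => ω k) ⁻¹' {w}) := meas_coord {w} k
    rw [measureReal_restrict_apply hm, Set.inter_comm]; rfl

theorem core {μ : Measure (ℕ → V)} [IsProbabilityMeasure μ] {P : V → V → ℝ} {x : V}
    (h : ∀ (k : ℕ) (p : ℕ → V), μ.real {ω | ∀ i ≤ k, ω i = p i} =
      (if p 0 = x then 1 else 0) * ∏ i ∈ Finset.range k, P (p i) (p (i + 1)))
    {F A : Set V} (hxF : x ∈ F) (hFA : ∀ z ∈ F, z ∉ A)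
    (φ : V → ℝ) (b : ℝ) (K : ℕ)
    (hout : ∀ z ∈ F, ∀ w, P z w ≠ 0 → w ∉ F → w ∉ A → φ w = b)
    (c : ℝ) (a0 : ℝ)
    (hA' : ∀ w ∈ A, φ w = a0)
    (hst : ∀ z ∈ F, ∑ w, P z w * φ w = φ z + c) :
    ∑ w, (if w ∈ F then μ.real (Dk F K ∩ {ω | ω K = w}) * φ w else 0)
      + a0 * ∑ k ∈ Finset.range K, μ.real (Dk F k ∩ {ω | ω (k + 1) ∈ A})
      + b * ∑ k ∈ Finset.range K, μ.real (Dk F k ∩ {ω | ω (k + 1) ∈ (F ∪ A)ᶜ})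
      = φ x + c * ∑ k ∈ Finset.range K, μ.real (Dk F k) := by
  induction K with
  | zero =>
    have : ∀ w, μ.real (Dk F 0 ∩ {ω | ω 0 = w}) = if w = x then 1 else 0 := by
      intro w
      have h0 := h 0 (fun _ => w)
      simp only [Nat.le_zero, forall_eq, Finset.range_zero, Finset.prod_empty, mul_one] at h0
      by_cases hw : w = x
      · subst hw
        rw [← h0]
        congr 1
        ext ω
        simp only [Dk, Nat.le_zero, forall_eq, Set.mem_inter_iff, Set.mem_ofPred_eq]
        exact ⟨fun h => h.2, fun h => ⟨h ▸ hxF, h⟩⟩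
      · rw [if_neg hw] at h0 ⊢
        refine le_antisymm ?_ measureReal_nonneg
        rw [← h0]
        exact measureReal_mono Set.inter_subset_right
    simp [this]
    rw [Finset.sum_eq_single x] <;> simp +contextual [hxF]
  | succ K ih =>
    have hm : ∀ w, μ.real (Dk F K ∩ {ω | ω (K + 1) = w}) =
        ∑ z, (if z ∈ F then μ.real (Dk F K ∩ {ω | ω K = z}) * P z w else 0) := by
      intro w
      have := sum_vals (μ := μ) (Dk F K ∩ {ω | ω (K + 1) = w}) K F
      rw [Set.inter_eq_left.2 (fun ω hω => hω.1 K le_rfl)] at this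
      rw [this]
      apply Finset.sum_congr rfl
      intro z _
      split_ifs with hz
      · rw [← markov h, Set.inter_right_comm]
      · rfl
    have hD : μ.real (Dk F K) = ∑ z, (if z ∈ F then μ.real (Dk F K ∩ {ω | ω K = z}) else 0) := by
      rw [← sum_vals]
      congr 1
      exact (Set.inter_eq_left.2 (fun ω (hω : ω ∈ Dk F K) => hω K le_rfl)).symm
    have hnext : ∀ w ∈ F, Dk F (K + 1) ∩ {ω | ω (K + 1) = w} = Dk F K ∩ {ω | ω (K + 1) = w} := by
      intro w hw
      ext ω
      simp only [Dk, Set.mem_inter_iff, Set.mem_ofPred_eq]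
      refine and_congr_left fun hω => ⟨fun h i hi => h i (by omega), fun h i hi => ?_⟩
      rcases Nat.le_succ_iff.1 hi with hi | rfl
      · exact h i hi
      · rw [hω]; exact hw
    have key : ∑ w, μ.real (Dk F K ∩ {ω | ω (K + 1) = w}) * φ w =
        ∑ w, (if w ∈ F then μ.real (Dk F K ∩ {ω | ω K = w}) * φ w else 0) + c * μ.real (Dk F K) := by
      simp_rw [hm, Finset.sum_mul]
      rw [Finset.sum_comm, hD, Finset.mul_sum, ← Finset.sum_add_distrib]
      apply Finset.sum_congr rfl
      intro z _
      split_ifs with hz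
      · simp_rw [mul_assoc]
        rw [← Finset.mul_sum, hst z hz]; ring
      · simp
    have hmb : ∀ w, w ∉ F → w ∉ A → μ.real (Dk F K ∩ {ω | ω (K + 1) = w}) * φ w =
        b * μ.real (Dk F K ∩ {ω | ω (K + 1) = w}) := by
      intro w h1 h2
      rw [hm, Finset.sum_mul, Finset.mul_sum]
      apply Finset.sum_congr rfl
      intro z _
      split_ifs with hz
      · by_cases hp : P z w = 0
        · simp [hp]
        · rw [hout z hz w hp h1 h2]; ring
      · simp
    have split : ∑ w, μ.real (Dk F K ∩ {ω | ω (K + 1) = w}) * φ w =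
        ∑ w, (if w ∈ F then μ.real (Dk F (K + 1) ∩ {ω | ω (K + 1) = w}) * φ w else 0)
        + a0 * μ.real (Dk F K ∩ {ω | ω (K + 1) ∈ A})
        + b * μ.real (Dk F K ∩ {ω | ω (K + 1) ∈ (F ∪ A)ᶜ}) := by
      rw [sum_vals _ _ A, sum_vals _ _ (F ∪ A)ᶜ, Finset.mul_sum, Finset.mul_sum,
        ← Finset.sum_add_distrib, ← Finset.sum_add_distrib]
      apply Finset.sum_congr rfl
      intro w _
      by_cases h1 : w ∈ F
      · have := hFA w h1
        simp [h1, this, hnext]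
      · by_cases h2 : w ∈ A
        · simp [h1, h2, hA' w h2]; ring
        · simp [h1, h2, hmb]
    rw [Finset.sum_range_succ, Finset.sum_range_succ, Finset.sum_range_succ]
    linarith

end prob
end GFF
namespace GFF
section fin
variable {V : Type*} [Fintype V] [MeasurableSpace V] [MeasurableSingletonClass V]

lemma numeric {G : SimpleGraph V} {d : ℕ} (hd : 3 ≤ d) (hreg : IsReg G d) (hG : G.Connected)
    {A : Set V} (hA : A.Nonempty) {s : ℕ} (hs : 1 ≤ s) {x : V} (hx : GoodVertex G A s x)
    {μ : Measure (ℕ → V)} [IsProbabilityMeasure μ]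
    (h : ∀ (k : ℕ) (p : ℕ → V), μ.real {ω | ∀ i ≤ k, ω i = p i} =
      (if p 0 = x then 1 else 0) * ∏ i ∈ Finset.range k, pr G d (p i) (p (i + 1))) (K : ℕ) :
    (∑ k ∈ Finset.range K, μ.real (Dk (Fset G A s x) k ∩ {ω | ω (k + 1) ∈ A}) ≤ ((d : ℝ) - 1)⁻¹) ∧
    (((d : ℝ) - 1)⁻¹ - (((d : ℝ) - 1)⁻¹) ^ (s + 1) - μ.real (Dk (Fset G A s x) K) ≤
      ∑ k ∈ Finset.range K, μ.real (Dk (Fset G A s x) k ∩ {ω | ω (k + 1) ∈ A})) ∧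
    (∑ k ∈ Finset.range K, μ.real (Dk (Fset G A s x) k) ≤ 3 * s) := by
  obtain ⟨hxF, hx1⟩ := good_mem hG hA hs hx
  set F := Fset G A s x with hF
  have hFA : ∀ z ∈ F, z ∉ A := by
    rintro z ⟨p, hp⟩
    exact (hp z p.end_mem_support).2
  have hd3 : (3 : ℝ) ≤ d := by exact_mod_cast hd
  have hd0 : (d : ℝ) ≠ 0 := by positivity
  have hd1 : (d : ℝ) - 1 ≠ 0 := by linarith
  set q : ℝ := ((d : ℝ) - 1)⁻¹ with hq
  have hq0 : 0 < q := by rw [hq]; apply inv_pos.2; linarith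
  have hq1 : q ≤ 1 := by rw [hq]; apply inv_le_one_of_one_le₀; linarith
  have hout : ∀ z ∈ F, ∀ w, pr G d z w ≠ 0 → w ∉ F → w ∉ A → lvl G A w = s + 1 := by
    intro z hz w hp hwF hwA
    have hadj : G.Adj z w := by
      by_contra hc
      exact hp (by simp [pr, hc])
    have h1 := F_lvl hG hA hz
    have h2 := lvl_adj hG hA hadj
    have h3 : lvl G A w ≠ 0 := fun h => hwA ((lvl_zero hG hA w).1 h)
    by_contra hne
    exact hwF (F_ext hG hA hz hadj (by omega) (by omega))
  have hst : ∀ z ∈ F, ∀ g : ℕ → ℝ, ∑ w, pr G d z w * g (lvl G A w) =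
      (d : ℝ)⁻¹ * g (lvl G A z - 1) + (d : ℝ)⁻¹ * ((d : ℝ) - 1) * g (lvl G A z + 1) := by
    intro z hz g
    obtain ⟨y, hy, hy2, hy3⟩ := good_struct hG hA hs hx hz
    have := pr_avg hd hreg hy (fun w => g (lvl G A w)) (g (lvl G A z + 1))
      (fun w hw hne => by simp only [hy3 w hw hne])
    rw [this, ← hy2]; simp
  have hA0 : ∀ w ∈ A, lvl G A w = 0 := fun w hw => (lvl_zero hG hA w).2 hw
  have c1 := core h hxF hFA (fun _ => 1) 1 K (by simp) 0 1 (by simp) (by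
    intro z hz
    rw [hst z hz (fun _ => 1)]; field_simp; ring)
  have c2 := core h hxF hFA (fun w => q ^ lvl G A w) (q ^ (s + 1)) K
    (fun z hz w a b c => by simp only [hout z hz w a b c]) 0 1
    (fun w hw => by simp [hA0 w hw]) (by
    intro z hz
    rw [hst z hz (fun l => q ^ l)]
    obtain ⟨l, hl⟩ : ∃ l, lvl G A z = l + 1 := ⟨lvl G A z - 1, by have := F_lvl hG hA hz; omega⟩
    rw [hl, hq]
    simp only [Nat.add_sub_cancel, pow_succ]
    field_simp
    ring)
  have c3 := core h hxF hFA (fun w => (lvl G A w : ℝ)) (s + 1) K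
    (fun z hz w a b c => by rw [hout z hz w a b c]; push_cast; ring) (((d : ℝ) - 2) / d) 0
    (fun w hw => by simp [hA0 w hw]) (by
    intro z hz
    rw [hst z hz (fun l => (l : ℝ))]
    obtain ⟨l, hl⟩ : ∃ l, lvl G A z = l + 1 := ⟨lvl G A z - 1, by have := F_lvl hG hA hz; omega⟩
    rw [hl]
    simp only [Nat.add_sub_cancel]
    push_cast
    field_simp
    ring)
  have hD : μ.real (Dk F K) = ∑ z, (if z ∈ F then μ.real (Dk F K ∩ {ω | ω K = z}) else 0) := by
    rw [← sum_vals]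
    congr 1
    exact (Set.inter_eq_left.2 (fun ω (hω : ω ∈ Dk F K) => hω K le_rfl)).symm
  simp only [mul_one, one_mul, zero_mul, add_zero] at c1 c2 c3
  rw [← hD] at c1
  rw [hx1] at c2 c3
  have r2 : 0 ≤ ∑ w, (if w ∈ F then μ.real (Dk F K ∩ {ω | ω K = w}) * q ^ lvl G A w else 0) := by
    apply Finset.sum_nonneg
    intro w _
    split_ifs
    · positivity
    · rfl
  have r2' : ∑ w, (if w ∈ F then μ.real (Dk F K ∩ {ω | ω K = w}) * q ^ lvl G A w else 0) ≤
      μ.real (Dk F K) := by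
    rw [hD]
    apply Finset.sum_le_sum
    intro w _
    split_ifs
    · exact mul_le_of_le_one_right measureReal_nonneg (pow_le_one₀ hq0.le hq1)
    · rfl
  have r3 : ∑ w, (if w ∈ F then μ.real (Dk F K ∩ {ω | ω K = w}) * (lvl G A w : ℝ) else 0) ≤
      (s + 1) * μ.real (Dk F K) := by
    rw [hD, Finset.mul_sum]
    apply Finset.sum_le_sum
    intro w _
    split_ifs with hw
    · rw [mul_comm]
      apply mul_le_mul_of_nonneg_right _ measureReal_nonneg
      have := (F_lvl hG hA hw).2
      have : (lvl G A w : ℝ) ≤ s := by exact_mod_cast this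
      linarith
    · simp
  have p0 : 0 ≤ ∑ k ∈ Finset.range K, μ.real (Dk F k ∩ {ω | ω (k + 1) ∈ A}) :=
    Finset.sum_nonneg fun _ _ => measureReal_nonneg
  have e0 : 0 ≤ ∑ k ∈ Finset.range K, μ.real (Dk F k ∩ {ω | ω (k + 1) ∈ (F ∪ A)ᶜ}) :=
    Finset.sum_nonneg fun _ _ => measureReal_nonneg
  have t0 : 0 ≤ ∑ k ∈ Finset.range K, μ.real (Dk F k) :=
    Finset.sum_nonneg fun _ _ => measureReal_nonneg
  have tK : 0 ≤ μ.real (Dk F K) := measureReal_nonneg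
  generalize (∑ k ∈ Finset.range K, μ.real (Dk F k ∩ {ω | ω (k + 1) ∈ A})) = p at *
  generalize (∑ k ∈ Finset.range K, μ.real (Dk F k ∩ {ω | ω (k + 1) ∈ (F ∪ A)ᶜ})) = e at *
  generalize (∑ k ∈ Finset.range K, μ.real (Dk F k)) = t at *
  generalize μ.real (Dk F K) = u at *
  have hqs : 0 < q ^ (s + 1) := by positivity
  refine ⟨?_, ?_, ?_⟩
  · have := mul_nonneg hqs.le e0
    rw [pow_one] at c2
    linarith
  · have : q ^ (s + 1) * e ≤ q ^ (s + 1) := mul_le_of_le_one_right hqs.le (by linarith)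
    rw [pow_one] at c2
    linarith
  · have h13 : (1 / 3 : ℝ) ≤ ((d : ℝ) - 2) / d := by
      rw [div_le_div_iff₀ (by norm_num) (by positivity)]; linarith
    have h1 := mul_le_mul_of_nonneg_right h13 t0
    have h2 : ((s : ℝ) + 1) * (u + e) ≤ (s + 1) * 1 := by
      apply mul_le_mul_of_nonneg_left _ (by positivity); linarith
    push_cast at c3
    linarith

lemma hit_eq {A : Set V} {ω : ℕ → V} {k : ℕ} (h : ω k ∈ A) (h' : ∀ i < k, ω i ∉ A) :
    hitTime A ω = k := by
  unfold hitTime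
  apply le_antisymm
  · exact sInf_le ⟨k, h, rfl⟩
  · apply le_sInf
    rintro _ ⟨j, hj, rfl⟩
    by_contra hc
    exact h' j (by simpa using hc) hj

lemma hit_top {A : Set V} {ω : ℕ → V} (h : ∀ i, ω i ∉ A) : hitTime A ω = ⊤ := by
  unfold hitTime
  have : {k | ω k ∈ A} = ∅ := by ext; simp [h]
  simp [this]

lemma exit_cases (F : Set V) (ω : ℕ → V) :
    (∀ k, ω k ∈ F) ∨ ∃ k, ω k ∉ F ∧ ∀ i < k, ω i ∈ F := by
  by_cases h : ∃ k, ω k ∉ F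
  · right
    exact ⟨Nat.find h, Nat.find_spec h, fun i hi => not_not.1 (Nat.find_min h hi)⟩
  · left; push Not at h; exact h

theorem final {G : SimpleGraph V} {d : ℕ} (hd : 3 ≤ d) (hreg : IsReg G d) (hG : G.Connected)
    {A : Set V} (hA : A.Nonempty) {s : ℕ} (hs : 1 ≤ s) {x : V} (hx : GoodVertex G A s x)
    {μ : Measure (ℕ → V)} [IsProbabilityMeasure μ]
    (h : ∀ (k : ℕ) (p : ℕ → V), μ.real {ω | ∀ i ≤ k, ω i = p i} =
      (if p 0 = x then 1 else 0) * ∏ i ∈ Finset.range k, pr G d (p i) (p (i + 1))) :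
    (ENNReal.ofReal (((d : ℝ) - 1)⁻¹ - (((d : ℝ) - 1)⁻¹) ^ (s + 1)) ≤
       μ {ω | hitTime A ω = exitTime (Fset G A s x) ω}) ∧
    (μ {ω | hitTime A ω = exitTime (Fset G A s x) ω} ≤ ENNReal.ofReal (((d : ℝ) - 1)⁻¹)) ∧
    ∫ p, ((exitTime (Fset G A s x) p).toNat : ℝ) ∂μ ≤ 3 * s := by
  have num := numeric hd hreg hG hA hs hx h
  obtain ⟨hxF, hx1⟩ := good_mem hG hA hs hx
  set F := Fset G A s x with hF
  have hFA : ∀ z ∈ F, z ∉ A := by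
    rintro z ⟨p, hp⟩
    exact (hp z p.end_mem_support).2
  have hx0 : ∀ᵐ ω ∂μ, ω 0 = x := by
    have h0 := h 0 (fun _ => x)
    simp only [Nat.le_zero, forall_eq, Finset.range_zero, Finset.prod_empty, mul_one, if_true] at h0
    have hm : MeasurableSet {ω : ℕ → V | ω 0 = x} := meas_coord {x} 0
    rw [ae_iff, ← Set.compl_ofPred, prob_compl_eq_zero_iff hm]
    rw [measureReal_def, ENNReal.toReal_eq_one_iff] at h0
    exact h0
  -- t_K → 0
  have hsum : Summable fun k => μ.real (Dk F k) :=
    summable_of_sum_range_le (fun _ => measureReal_nonneg) fun K => (num K).2.2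
  have ht0 := hsum.tendsto_atTop_zero
  have htsum : ∑' k, μ (Dk F k) ≤ ENNReal.ofReal (3 * s) := by
    apply ENNReal.tsum_le_of_sum_range_le
    intro K
    have : ∑ k ∈ Finset.range K, μ (Dk F k) =
        ENNReal.ofReal (∑ k ∈ Finset.range K, μ.real (Dk F k)) := by
      rw [ENNReal.ofReal_sum_of_nonneg (fun _ _ => measureReal_nonneg)]
      simp
    rw [this]
    exact ENNReal.ofReal_le_ofReal (num K).2.2
  have hinf : μ {ω | ∀ k, ω k ∈ F} = 0 := by
    have : μ.real {ω | ∀ k, ω k ∈ F} ≤ 0 := by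
      apply ge_of_tendsto' ht0
      intro K
      exact measureReal_mono (fun ω hω i _ => hω i)
    rw [← measureReal_eq_zero_iff]
    exact le_antisymm this measureReal_nonneg
  set P : ℕ → Set (ℕ → V) := fun k => Dk F k ∩ {ω | ω (k + 1) ∈ A} with hP
  have hPm : ∀ k, MeasurableSet (P k) := fun k => (meas_Dk F k).inter (meas_coord A (k + 1))
  have hPd : Pairwise (Function.onFun Disjoint P) := by
    have : ∀ i j, i < j → Disjoint (P i) (P j) := by
      intro i j hij
      rw [Set.disjoint_left]
      rintro ω ⟨_, h1⟩ ⟨h2, _⟩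
      exact hFA _ (h2 (i + 1) (by omega)) h1
    intro i j hij
    rcases lt_or_gt_of_ne hij with h | h
    · exact this i j h
    · exact (this j i h).symm
  have hPsum : ∀ K, ∑ k ∈ Finset.range K, μ (P k) =
        ENNReal.ofReal (∑ k ∈ Finset.range K, μ.real (P k)) := by
    intro K
    rw [ENNReal.ofReal_sum_of_nonneg (fun _ _ => measureReal_nonneg)]
    simp
  refine ⟨?_, ?_, ?_⟩
  · have hsub : ∀ k, P k ⊆ {ω | hitTime A ω = exitTime F ω} := by
      rintro k ω ⟨h1, h2⟩
      have e1 : hitTime A ω = ((k + 1 : ℕ) : ℕ∞) :=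
        hit_eq h2 (fun i hi => hFA _ (h1 i (by omega)))
      have e2 : exitTime F ω = ((k + 1 : ℕ) : ℕ∞) :=
        hit_eq (fun h => hFA _ h h2) (fun i hi => fun hc => hc (h1 i (by omega)))
      exact e1.trans e2.symm
    have hlow : ∀ K, ENNReal.ofReal (((d : ℝ) - 1)⁻¹ - (((d : ℝ) - 1)⁻¹) ^ (s + 1) - μ.real (Dk F K)) ≤
        μ {ω | hitTime A ω = exitTime F ω} := by
      intro K
      refine (ENNReal.ofReal_le_ofReal (num K).2.1).trans ?_
      rw [← hPsum, ← measure_biUnion_finset (fun i _ j _ hij => hPd hij) (fun k _ => hPm k)]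
      exact measure_mono (Set.iUnion₂_subset fun k _ => hsub k)
    refine le_of_tendsto' (x := atTop) ?_ hlow
    apply ENNReal.tendsto_ofReal
    simpa using tendsto_const_nhds.sub ht0
  · have hsub : {ω | hitTime A ω = exitTime F ω} ⊆
        ((⋃ k, P k) ∪ {ω | ∀ k, ω k ∈ F}) ∪ {ω | ¬ ω 0 = x} := by
      intro ω hω
      by_cases h0 : ω 0 = x
      · left
        rcases exit_cases F ω with hc | ⟨k, hk, hk2⟩
        · right; exact hc
        · left
          cases k with
          | zero => exact absurd (h0 ▸ hxF) hk
          | succ k =>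
            have e2 : exitTime F ω = ((k + 1 : ℕ) : ℕ∞) :=
              hit_eq hk (fun i hi => fun hc => hc (hk2 i (by omega)))
            refine Set.mem_iUnion.2 ⟨k, fun i hi => hk2 i (by omega), ?_⟩
            have hω' : hitTime A ω = ((k + 1 : ℕ) : ℕ∞) := Eq.trans hω e2
            rcases exit_cases Aᶜ ω with hc | ⟨j, hj, hj2⟩
            · rw [hit_top hc] at hω'
              exact absurd hω'.symm (ENat.coe_ne_top _)
            · rw [hit_eq (not_not.1 hj) hj2] at hω'
              have : j = k + 1 := by exact_mod_cast hω'
              rw [this] at hj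
              exact not_not.1 hj
      · right; exact h0
    refine (measure_mono hsub).trans ?_
    have hx0' : μ {ω | ¬ ω 0 = x} = 0 := hx0
    refine (measure_union_le _ _).trans ?_
    rw [hx0', add_zero]
    refine (measure_union_le _ _).trans ?_
    rw [hinf, add_zero]
    refine (measure_iUnion_le _).trans ?_
    apply ENNReal.tsum_le_of_sum_range_le
    intro K
    rw [hPsum]
    exact ENNReal.ofReal_le_ofReal (num K).1
  · by_cases hi : Integrable (fun p => ((exitTime F p).toNat : ℝ)) μ
    · rw [integral_eq_lintegral_of_nonneg_ae (ae_of_all _ fun _ => by positivity)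
        hi.aestronglyMeasurable]
      apply ENNReal.toReal_le_of_le_ofReal (by positivity)
      refine le_trans ?_ htsum
      have : ∀ k, μ (Dk F k) = ∫⁻ ω, (Dk F k).indicator (fun _ => 1) ω ∂μ := by
        intro k
        rw [lintegral_indicator (meas_Dk F k)]; simp
      simp_rw [this]
      rw [← lintegral_tsum (fun k => (measurable_const.indicator (meas_Dk F k)).aemeasurable)]
      apply lintegral_mono
      intro ω
      rcases exit_cases F ω with hc | ⟨k, hk, hk2⟩
      · have : exitTime F ω = ⊤ := hit_top (fun i hi => hi (hc i))
        simp [this]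
      · have e2 : exitTime F ω = ((k : ℕ) : ℕ∞) := hit_eq hk (fun i hi => fun hc => hc (hk2 i hi))
        simp only [e2, ENat.toNat_coe, ENNReal.ofReal_natCast]
        refine le_trans ?_ (ENNReal.sum_le_tsum (Finset.range k))
        rw [Finset.sum_congr rfl (g := fun _ => (1 : ℝ≥0∞))]
        · simp
        · intro j hj
          rw [Set.indicator_of_mem]
          intro i hi
          exact hk2 i (by have := Finset.mem_range.1 hj; omega)
    · rw [integral_undef hi]; positivity

end fin
end GFF
/-- exit behaviour of SRW started at a good vertex at the boundary of `A`. -/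
theorem good_vertex_exit_probability
    (d : ℕ) (hd : 3 ≤ d)
    (V : ℕ → Type) [∀ n, Fintype (V n)] [∀ n, MeasurableSpace (V n)]
    (G : ∀ n, SimpleGraph (V n)) (N : ℕ → ℕ) (α β : ℝ)
    (hα : 0 < α ∧ α ≤ 1) (hβ : 0 < β ∧ β ≤ 2)
    (hNmono : StrictMono N) (hNpos : ∀ n, 1 ≤ N n)
    (hcard : ∀ n, Nat.card (V n) = N n)
    (hconn : ∀ n, (G n).Connected)
    (hreg : ∀ n, GFF.IsReg (G n) d)
    (hcyc : ∀ n (x : V n),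
      GFF.adjPairs (G n) (GFF.gball (G n) x ⌊α * Real.logb ((d : ℝ) - 1) (N n : ℝ)⌋₊) ≤
        2 * (GFF.gball (G n) x ⌊α * Real.logb ((d : ℝ) - 1) (N n : ℝ)⌋₊).ncard)
    (hgap : ∀ n, GFF.SpectralGapLB (G n) d β)
    (W : ∀ n, V n → Measure (ℕ → V n))
    (hW : ∀ n, GFF.IsSRW (G n) d (W n)) :
    ∃ c : ℝ, 0 < c ∧
      ∀ (n : ℕ) (A : Set (V n)) (x : V n),
        A.Nonempty → A ≠ Set.univ →
        GFF.GoodVertex (G n) A (GFF.sn d (N n)) x →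
        (ENNReal.ofReal (((d : ℝ) - 1)⁻¹ - c / Real.log (N n) ^ 7) ≤
            W n x {ω | GFF.hitTime A ω =
              GFF.exitTime (GFF.Fset (G n) A (GFF.sn d (N n)) x) ω}) ∧
        (W n x {ω | GFF.hitTime A ω =
              GFF.exitTime (GFF.Fset (G n) A (GFF.sn d (N n)) x) ω} ≤
            ENNReal.ofReal (((d : ℝ) - 1)⁻¹)) ∧
        (∫ p, ((GFF.exitTime (GFF.Fset (G n) A (GFF.sn d (N n)) x) p).toNat : ℝ) ∂ W n x ≤
          c * Real.log (N n)) := by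
  have hd3 : (3 : ℝ) ≤ d := by exact_mod_cast hd
  set D : ℝ := (d : ℝ) - 1 with hD
  have hD2 : 2 ≤ D := by linarith
  have hlD : 0 < Real.log D := Real.log_pos (by linarith)
  refine ⟨Real.log D ^ 8 + 3 * (1 + 8 / Real.log D ^ 2), by positivity, ?_⟩
  intro n A x hA _ hx
  haveI := GFF.srw_singleton (hW n)
  haveI := (hW n).1 x
  have hs : 1 ≤ GFF.sn d (N n) := le_max_left _ _
  have hcyl : ∀ (k : ℕ) (p : ℕ → V n), (W n x).real {ω | ∀ i ≤ k, ω i = p i} =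
      (if p 0 = x then 1 else 0) * ∏ i ∈ Finset.range k, GFF.pr (G n) d (p i) (p (i + 1)) := by
    intro k p
    rw [measureReal_def, (hW n).2 x k p, ENNReal.toReal_mul, ENNReal.toReal_prod]
    congr 1
    · split_ifs <;> simp
    · apply Finset.prod_congr rfl
      intro i _
      unfold GFF.srwStep GFF.pr
      split_ifs <;> simp
  obtain ⟨f1, f2, f3⟩ := GFF.final hd (hreg n) (hconn n) hA hs hx hcyl
  have hNd : d + 1 ≤ N n := by
    have h1 := hreg n x
    rw [Nat.card_eq_fintype_card, SimpleGraph.card_neighborSet_eq_degree] at h1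
    have h2 := (G n).degree_lt_card_verts x
    rw [h1, ← Nat.card_eq_fintype_card, hcard] at h2
    omega
  have hNR : (4 : ℝ) ≤ N n ∧ D < N n := by
    have : (d : ℝ) + 1 ≤ N n := by exact_mod_cast hNd
    constructor <;> linarith
  set L := Real.log (N n) with hL
  have hL1 : 1 ≤ L := by
    rw [hL, Real.le_log_iff_exp_le (by linarith)]
    have := Real.exp_one_lt_d9
    linarith
  have hLD : Real.log D < L := Real.log_lt_log (by linarith) hNR.2
  set y := Real.logb D (N n) with hy
  have hyL : y = L / Real.log D := rfl
  have hy1 : 1 < y := by rw [hyL, one_lt_div hlD]; exact hLD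
  have hz0 : 0 ≤ Real.logb D y := Real.logb_nonneg (by linarith) hy1.le
  refine ⟨?_, f2, ?_⟩
  · refine le_trans (ENNReal.ofReal_le_ofReal ?_) f1
    apply sub_le_sub_left
    have hpow : y ^ 8 ≤ D ^ (GFF.sn d (N n) + 1) := by
      have h1 : 8 * Real.logb D y ≤ ((GFF.sn d (N n) + 1 : ℕ) : ℝ) := by
        have a1 := (Nat.lt_floor_add_one (8 * Real.logb D y)).le
        have a2 : ⌊8 * Real.logb D y⌋₊ ≤ GFF.sn d (N n) := le_max_right _ _
        have a3 : (⌊8 * Real.logb D y⌋₊ : ℝ) ≤ GFF.sn d (N n) := by exact_mod_cast a2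
        push_cast
        linarith
      have h2 : D ^ (8 * Real.logb D y) = y ^ 8 := by
        rw [mul_comm, Real.rpow_mul (by linarith), Real.rpow_logb (by linarith) (by linarith)
          (by linarith)]
        exact_mod_cast Real.rpow_natCast y 8
      rw [← h2, ← Real.rpow_natCast D]
      exact Real.rpow_le_rpow_of_exponent_le (by linarith) h1
    rw [inv_pow]
    have h3 : (D ^ (GFF.sn d (N n) + 1))⁻¹ ≤ (y ^ 8)⁻¹ := inv_anti₀ (by positivity) hpow
    refine h3.trans ?_
    rw [hyL, div_pow, inv_div]
    have h4 : Real.log D ^ 8 / L ^ 8 ≤ Real.log D ^ 8 / L ^ 7 := by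
      apply div_le_div_of_nonneg_left (by positivity) (by positivity)
      exact pow_le_pow_right₀ hL1 (by norm_num)
    refine h4.trans ?_
    apply div_le_div_of_nonneg_right _ (by positivity)
    have : 0 ≤ 3 * (1 + 8 / Real.log D ^ 2) := by positivity
    linarith
  · refine f3.trans ?_
    have h1 : (GFF.sn d (N n) : ℝ) ≤ 1 + 8 * Real.logb D y := by
      have a1 : (⌊8 * Real.logb D y⌋₊ : ℝ) ≤ 8 * Real.logb D y := Nat.floor_le (by positivity)
      have : GFF.sn d (N n) = max 1 ⌊8 * Real.logb D y⌋₊ := rfl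
      rw [this]
      push_cast
      apply max_le <;> linarith
    have h2 : Real.logb D y ≤ L / Real.log D ^ 2 := by
      have : Real.log y ≤ y := (Real.log_le_sub_one_of_pos (by linarith)).trans (by linarith)
      calc Real.logb D y = Real.log y / Real.log D := rfl
        _ ≤ y / Real.log D := by gcongr
        _ = L / Real.log D ^ 2 := by rw [hyL]; field_simp
    have h3 : 0 ≤ Real.log D ^ 8 * L := by positivity
    have h4 : 8 / Real.log D ^ 2 * L = 8 * (L / Real.log D ^ 2) := by ring
    nlinarith
end
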